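/- arXiv:2303.05583 — 10 statements merged into one kernel-verified Lean document; each statement's English description precedes it below -/
import Mathlib

section
/- Fix a half-edge structure (V, H, opp, tgt). Let d : V → ℤ, let f₀ be a nowhere-zero flow with ∂₁f₀ = d, and let Q be a finite set of pairs (K, a) where K is a 1-chain and a ∈ ℤ. Then the following are equivalent: (1) there exists a nowhere-zero flow f with ∂₁f = d and ⟨f⟩(K) = a for each (K, a) ∈ Q; (2) there exists an f₀-circulation c with ⟨c⟩(K) = (⟨f₀⟩(K) - a)/2 for each (K, a) ∈ Q. (Corollary 8 of the paper.) -/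
/-!
The two sides correspond under the change of variables `f = f₀ - 2c`. The boundary is linear, so
`∂₁ f = d` is equivalent to `∂₁ c = 0`; the pairing is linear on 1-chains, so `⟨f⟩(K) = a` is
equivalent to `2⟨c⟩(K) = ⟨f₀⟩(K) - a`; and the values of `f` lie in `{-1, 1}` exactly when
`c(h) ∈ {0, 1}` where `f₀(h) = 1` and `c(h) ∈ {-1, 0}` where `f₀(h) = -1`. By antisymmetry the
latter is `c ⪯ f₀`.

Since `pairing` is defined by integer division, its linearity depends on the sum `Σ f(h)K(h)` being
even (`two_mul_pairing`): the terms at `h` and `opp h` agree, and `opp` has no fixed points.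
-/

open Finset

namespace Paper

variable {V H F : Type*} [Fintype V] [Fintype H] [Fintype F]
variable [DecidableEq V] [DecidableEq F]

/-- `f` is a 1-chain: antisymmetric under the involution `opp`. -/
def OneChain (opp : H → H) (f : H → ℤ) : Prop :=
  ∀ h, f (opp h) = - f h

/-- `⟨f⟩(K) = (1/2)·Σ_h f(h)·K(h)`; the sum is even when `f` and `K` are 1-chains. -/
def pairing (f K : H → ℤ) : ℤ := (∑ h, f h * K h) / 2

/-- `⟨f⟩⁺(K) = Σ_{h : f(h) > 0, K(h) > 0} f(h)·K(h)`. -/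
def transplus (f K : H → ℤ) : ℤ :=
  ∑ h, if 0 < f h ∧ 0 < K h then f h * K h else 0

/-- `|K| = (1/2)·Σ_h |K(h)|`; the sum is even when `K` is a 1-chain. -/
def norm1 (K : H → ℤ) : ℤ := (∑ h, |K h|) / 2

/-- The boundary `∂₁ f : V → ℤ` of a 1-chain `f`. -/
def bd1 (tgt : H → V) (f : H → ℤ) (v : V) : ℤ :=
  ∑ h, if tgt h = v then f h else 0

/-- The 1-chain `∂⋆₂ v`. -/
def coB (opp : H → H) (tgt : H → V) (v : V) : H → ℤ :=
  fun h => (if tgt h = v then 1 else 0) - (if tgt (opp h) = v then 1 else 0)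

/-- A coboundary: a ℤ-linear combination of the 1-chains `∂⋆₂ v` for `v ∈ V`. -/
def IsCobound (opp : H → H) (tgt : H → V) (R : H → ℤ) : Prop :=
  ∃ z : V → ℤ, ∀ h, R h = ∑ v, z v * coB opp tgt v h

/-- A 1-cycle: a 1-chain `f` with `∂₁ f = 0`. -/
def OneCycle (opp : H → H) (tgt : H → V) (f : H → ℤ) : Prop :=
  OneChain opp f ∧ ∀ v, bd1 tgt f v = 0

/-- A flow: a 1-chain with all values in `{-1, 0, 1}`. -/
def IsFlow (opp : H → H) (f : H → ℤ) : Prop :=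
  OneChain opp f ∧ ∀ h, f h = -1 ∨ f h = 0 ∨ f h = 1

/-- A nowhere-zero flow: a 1-chain with all values in `{-1, 1}`. -/
def IsNZFlow (opp : H → H) (f : H → ℤ) : Prop :=
  OneChain opp f ∧ ∀ h, f h = 1 ∨ f h = -1

/-- `c ⪯ f`: `0 ≤ c(h) ≤ f(h)` for every half-edge `h` with `f(h) ≥ 0`. -/
def Prec (c f : H → ℤ) : Prop :=
  ∀ h, 0 ≤ f h → 0 ≤ c h ∧ c h ≤ f h

/-- An `f`-circulation: a 1-cycle `c` with `c ⪯ f`. -/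
def IsCirc (opp : H → H) (tgt : H → V) (f c : H → ℤ) : Prop :=
  OneCycle opp tgt c ∧ Prec c f

/-- `⟨f⟩⁺(K + B⋆)`: the minimum of `⟨f⟩⁺(K + R)` over all coboundaries `R`. -/
noncomputable def transplusB (opp : H → H) (tgt : H → V) (f K : H → ℤ) : ℤ :=
  sInf {n : ℤ | ∃ R : H → ℤ, IsCobound opp tgt R ∧ n = transplus f (fun h => K h + R h)}

/-- The degree of a vertex: the number of half-edges with target `v`. -/
def degH (tgt : H → V) (v : V) : ℕ := (Finset.univ.filter fun h => tgt h = v).card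

/-- The integer division in `pairing` is exact on 1-chains. -/
theorem two_mul_pairing {opp : H → H} (hinv : Function.Involutive opp) (hfp : ∀ h, opp h ≠ h)
    {f K : H → ℤ} (hf : OneChain opp f) (hK : OneChain opp K) :
    2 * pairing f K = ∑ h, f h * K h := by
  refine Int.mul_ediv_cancel' ?_
  -- Modulo 2, the terms at `h` and `opp h` cancel.
  refine (ZMod.intCast_zmod_eq_zero_iff_dvd _ 2).1 ?_
  rw [Int.cast_sum]
  refine Finset.sum_involution (fun h _ => opp h) (fun h _ => ?_) (fun h _ _ => hfp h)
    (fun h _ => Finset.mem_univ _) (fun h _ => hinv h)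
  rw [hf h, hK h, neg_mul_neg]
  exact CharTwo.add_self_eq_zero _

theorem bd1_eq_sub_two_mul (tgt : H → V) {f f₀ c : H → ℤ} (h : ∀ h, f h = f₀ h - 2 * c h) (v : V) :
    bd1 tgt f v = bd1 tgt f₀ v - 2 * bd1 tgt c v := by
  unfold bd1
  rw [Finset.mul_sum, ← Finset.sum_sub_distrib]
  refine Finset.sum_congr rfl fun x _ => ?_
  split_ifs <;> simp [h]

theorem pairing_eq_sub_two_mul {opp : H → H} (hinv : Function.Involutive opp)
    (hfp : ∀ h, opp h ≠ h) {f f₀ c K : H → ℤ} (hf : OneChain opp f) (hf₀ : OneChain opp f₀)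
    (hc : OneChain opp c) (hK : OneChain opp K) (h : ∀ h, f h = f₀ h - 2 * c h) :
    pairing f K = pairing f₀ K - 2 * pairing c K := by
  have h1 := two_mul_pairing hinv hfp hf hK
  have h2 := two_mul_pairing hinv hfp hf₀ hK
  have h3 := two_mul_pairing hinv hfp hc hK
  have h4 : ∑ x, f x * K x = ∑ x, f₀ x * K x - 2 * ∑ x, c x * K x := by
    rw [Finset.mul_sum, ← Finset.sum_sub_distrib]
    exact Finset.sum_congr rfl fun x _ => by rw [h]; ring
  linarith

theorem statement_3
    (opp : H → H) (tgt : H → V)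
    (hinv : Function.Involutive opp) (hfp : ∀ h, opp h ≠ h)
    (d : V → ℤ) (f₀ : H → ℤ) (hf₀ : IsNZFlow opp f₀)
    (hbd : ∀ v, bd1 tgt f₀ v = d v)
    (Q : Finset ((H → ℤ) × ℤ)) (hQ : ∀ p ∈ Q, OneChain opp p.1) :
    (∃ f : H → ℤ, IsNZFlow opp f ∧ (∀ v, bd1 tgt f v = d v) ∧
        ∀ p ∈ Q, pairing f p.1 = p.2) ↔
    (∃ c : H → ℤ, IsCirc opp tgt f₀ c ∧
        ∀ p ∈ Q, 2 * pairing c p.1 = pairing f₀ p.1 - p.2) := by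
  constructor
  · rintro ⟨f, hf, hfd, hfQ⟩
    have hfc : ∀ h, f h = f₀ h - 2 * ((f₀ h - f h) / 2) := fun h => by
      rcases hf.2 h with h1 | h1 <;> rcases hf₀.2 h with h2 | h2 <;> rw [h1, h2] <;> norm_num
    have hc : OneChain opp fun h => (f₀ h - f h) / 2 := fun h => by
      have h1 := hfc h
      have h2 := hfc (opp h)
      have h3 := hf.1 h
      have h4 := hf₀.1 h
      dsimp only
      omega
    refine ⟨fun h => (f₀ h - f h) / 2, ⟨⟨hc, fun v => ?_⟩, fun h h0 => ?_⟩, fun p hp => ?_⟩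
    · have := bd1_eq_sub_two_mul tgt hfc v
      rw [hfd, hbd] at this
      linarith
    · have h1 := hf.2 h
      have h2 := hf₀.2 h
      dsimp only
      omega
    · have := pairing_eq_sub_two_mul hinv hfp hf.1 hf₀.1 hc (hQ p hp) hfc
      rw [hfQ p hp] at this
      linarith
  · rintro ⟨c, ⟨⟨hc, hcd⟩, hle⟩, hcQ⟩
    have hf : OneChain opp fun h => f₀ h - 2 * c h := fun h => by
      have h1 := hc h
      have h2 := hf₀.1 h
      dsimp only
      omega
    refine ⟨fun h => f₀ h - 2 * c h, ⟨hf, fun h => ?_⟩, fun v => ?_, fun p hp => ?_⟩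
    · -- Where `f₀ h = -1`, the bound on `c h` comes from `c ⪯ f₀` at `opp h`.
      have h1 := hle h
      have h2 := hle (opp h)
      rw [hc, hf₀.1] at h2
      have h3 := hf₀.2 h
      dsimp only
      omega
    · rw [bd1_eq_sub_two_mul tgt (fun _ => rfl) v, hcd, hbd]
      ring
    · rw [pairing_eq_sub_two_mul hinv hfp hf hf₀.1 hc (hQ p hp) (fun _ => rfl), hcQ p hp]
      ring

end Paper
end

section
/- Fix a half-edge structure (V, H, opp, tgt), and for v ∈ V let deg(v) = #{h ∈ H : tgt(h) = v}. Let d : V → ℤ. Then the following are equivalent: (i) there exists a nowhere-zero flow f₀ with ∂₁f₀ = d; (ii) d(v) ≡ deg(v) (mod 2) for every vertex v, and there exists a flow f₁ with ∂₁f₁ = d. (Lemma 9 of the paper, without the algorithmic statement.) -/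
/-!
A nowhere-zero flow is a flow, and its boundary at `v` is a sum of `deg v` odd numbers, which gives
one direction. Conversely, let `f₁` be a flow with boundary `d` and let `Z` be the set of half-edges
on which it vanishes. By the parity condition an even number of half-edges of `Z` end at each
vertex, so they can be paired up vertex by vertex (`exists_pairing_of_even`). This pairing, extended
by `opp` outside `Z`, is a fixed-point-free involution, and there is a sign function reversed both
by it and by `opp` (`exists_sign_of_involutions`). Reversal under `opp` says that the signs on `Z`
form a 1-chain; reversal under the pairing says that its boundary is zero (an Eulerian orientation
of the edges in `Z`). Adding it to `f₁` gives the nowhere-zero flow.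
-/

open Finset

namespace Paper

variable {V H F : Type*} [Fintype V] [Fintype H] [Fintype F]
variable [DecidableEq V] [DecidableEq F]

/-- Within a finite set of even size the elements can be paired up. -/
theorem exists_pairing_of_even {α : Type*} (S : Finset α) (hS : Even S.card) :
    ∃ τ : α → α, ∀ x ∈ S, τ x ∈ S ∧ τ (τ x) = x ∧ τ x ≠ x := by
  classical
  obtain ⟨m, hm⟩ := hS
  have e : S ≃ Fin m ⊕ Fin m := Fintype.equivOfCardEq (by simp [hm])
  refine ⟨fun x => if hx : x ∈ S then (e.symm (e ⟨x, hx⟩).swap).1 else x, fun x hx => ?_⟩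
  refine ⟨by simp [hx], by simp [hx], ?_⟩
  intro h
  simp only [hx, dite_true] at h
  have h2 : e.symm (e ⟨x, hx⟩).swap = ⟨x, hx⟩ := Subtype.ext h
  rw [Equiv.symm_apply_eq] at h2
  cases h3 : e ⟨x, hx⟩ <;> simp [h3] at h2

/-- Two fixed-point-free involutions `a`, `b` on the same set admit a common sign function
switched by both (the union of two perfect matchings is bipartite). The permutation `p = ab`
satisfies `a p a = p⁻¹`, so `a` and `b` induce the same involution on the set of `p`-cycles.
It has no fixed cycle, because `a p ^ k` is conjugate to `a` or to `b`; hence one cycle of each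
pair can be given the sign `1` and the other `-1`. -/
theorem exists_sign_of_involutions {α : Type*} (a b : α → α)
    (ha : Function.Involutive a) (hb : Function.Involutive b)
    (ha' : ∀ x, a x ≠ x) (hb' : ∀ x, b x ≠ x) :
    ∃ s : α → ℤ, (∀ x, s x = 1 ∨ s x = -1) ∧ (∀ x, s (a x) = - s x) ∧
      ∀ x, s (b x) = - s x := by
  classical
  set A : Equiv.Perm α := ha.toPerm with hA
  set B : Equiv.Perm α := hb.toPerm with hB
  have hAA : A * A = 1 := Equiv.ext fun x => ha x
  have hBB : B * B = 1 := Equiv.ext fun x => hb x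
  have hAi : A⁻¹ = A := inv_eq_of_mul_eq_one_left hAA
  have hBi : B⁻¹ = B := inv_eq_of_mul_eq_one_left hBB
  set p : Equiv.Perm α := A * B with hp
  have hpi : A * p * A⁻¹ = p⁻¹ := by
    rw [hp, mul_inv_rev, hAi, hBi, ← mul_assoc, hAA, one_mul]
  have hconj : ∀ (k : ℤ) (x : α), a ((p ^ k) x) = (p ^ (-k)) (a x) := by
    intro k x
    have h1 : A * p ^ k = p ^ (-k) * A := by
      rw [zpow_neg, ← inv_zpow, ← hpi, conj_zpow]; group
    exact congrArg (fun g : Equiv.Perm α => g x) h1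
  have hpb : ∀ x, a (p x) = b x := fun x => ha (b x)
  let Q := Quotient (Equiv.Perm.SameCycle.setoid p)
  let abar : Q → Q := Quotient.map a (by
    rintro x y ⟨k, rfl⟩
    exact ⟨-k, (hconj k x).symm⟩)
  have habar : ∀ x, abar (Quotient.mk _ x) = Quotient.mk _ (a x) := fun x => rfl
  have hinv : ∀ q, abar (abar q) = q := by
    intro q
    induction q using Quotient.inductionOn with
    | h x => rw [habar, habar, ha x]
  have hne : ∀ q, abar q ≠ q := by
    intro q
    induction q using Quotient.inductionOn with
    | h x =>
      intro h
      obtain ⟨k, hk⟩ : p.SameCycle x (a x) := (Quotient.exact h).symm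
      rcases Int.even_or_odd' k with ⟨j, rfl | rfl⟩
      · -- `p ^ (2 j) x = a x` makes `p ^ j x` a fixed point of `a`
        apply ha' ((p ^ j) x)
        rw [hconj, ← hk, ← Equiv.Perm.mul_apply, ← zpow_add]
        congr 2; ring
      · -- `p ^ (2 j + 1) x = a x` makes `p ^ j x` a fixed point of `b`
        apply hb' ((p ^ j) x)
        rw [← hpb, ← Equiv.Perm.mul_apply, ← zpow_one_add, hconj, ← hk,
          ← Equiv.Perm.mul_apply, ← zpow_add]
        congr 2; ring
  -- an arbitrary linear order selects one cycle out of each pair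
  let _ : LinearOrder Q := linearOrderOfSTO (WellOrderingRel (α := Q))
  let t : Q → ℤ := fun q => if q < abar q then 1 else -1
  have ht : ∀ q, t (abar q) = - t q := by
    intro q
    simp only [t, hinv]
    rcases lt_trichotomy q (abar q) with h | h | h
    · simp [h, h.not_gt]
    · exact absurd h.symm (hne q)
    · simp [h, h.not_gt]
  refine ⟨fun x => t (Quotient.mk _ x), fun x => ?_, fun x => ?_, fun x => ?_⟩
  · simp only [t]; split_ifs <;> simp
  · exact ht (Quotient.mk _ x)
  · have h1 : (Quotient.mk (Equiv.Perm.SameCycle.setoid p) (p x)) = Quotient.mk _ x :=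
      Quotient.sound (⟨-1, by simp⟩ : p.SameCycle (p x) x)
    rw [← hpb]
    exact (ht (Quotient.mk _ (p x))).trans (by rw [h1])

theorem bd1_eq_sum_filter {W E : Type*} [Fintype E] [DecidableEq W] (tgt : E → W)
    (f : E → ℤ) (v : W) :
    bd1 tgt f v = ∑ h ∈ univ.filter (fun h => tgt h = v), f h := by
  rw [bd1, sum_filter]

theorem statement_4
    (opp : H → H) (tgt : H → V)
    (hinv : Function.Involutive opp) (hfp : ∀ h, opp h ≠ h)
    (d : V → ℤ) :
    (∃ f₀ : H → ℤ, IsNZFlow opp f₀ ∧ ∀ v, bd1 tgt f₀ v = d v) ↔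
    ((∀ v, d v ≡ (degH tgt v : ℤ) [ZMOD 2]) ∧
      ∃ f₁ : H → ℤ, IsFlow opp f₁ ∧ ∀ v, bd1 tgt f₁ v = d v) := by
  classical
  constructor
  · rintro ⟨f, ⟨hc, hv⟩, hd⟩
    refine ⟨fun v => ?_, f, ⟨hc, fun h => ?_⟩, hd⟩
    · rw [← hd v, bd1_eq_sum_filter, degH, card_eq_sum_ones]
      push_cast
      refine (Int.modEq_iff_dvd.2 ?_)
      rw [← sum_sub_distrib]
      refine dvd_sum fun h _ => ?_
      rcases hv h with h | h <;> simp [h]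
    · rcases hv h with h | h <;> simp [h]
  · rintro ⟨hpar, f, ⟨hc, hv⟩, hd⟩
    let Z : V → Finset H := fun v => univ.filter fun h => tgt h = v ∧ f h = 0
    have hmem : ∀ v h, h ∈ Z v ↔ tgt h = v ∧ f h = 0 := fun v h => by simp [Z]
    have hZ : ∀ v, Even (Z v).card := by
      intro v
      have h1 : ((Z v).card : ℤ) =
          ∑ h ∈ univ.filter (fun h => tgt h = v), if f h = 0 then 1 else 0 := by
        simp [Z, filter_filter]
      have h2 : (2 : ℤ) ∣ (degH tgt v : ℤ) - d v := Int.modEq_iff_dvd.1 (hpar v)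
      have h3 : (2 : ℤ) ∣ (Z v).card - ((degH tgt v : ℤ) - d v) := by
        rw [h1, ← hd v, bd1_eq_sum_filter, degH, card_eq_sum_ones]
        push_cast
        rw [← sum_sub_distrib, ← sum_sub_distrib]
        refine dvd_sum fun h _ => ?_
        rcases hv h with h | h | h <;> simp [h]
      have h4 : (2 : ℤ) ∣ ((Z v).card : ℤ) := (dvd_sub_left h2).1 h3
      exact even_iff_two_dvd.2 (by exact_mod_cast h4)
    choose τ hτ using fun v => exists_pairing_of_even (Z v) (hZ v)
    let b : H → H := fun h => if f h = 0 then τ (tgt h) h else opp h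
    have hb0 : ∀ v, ∀ h ∈ Z v, b h = τ v h := by
      intro v h hh
      obtain ⟨rfl, h0⟩ := (hmem v h).1 hh
      simp [b, h0]
    have hb1 : ∀ h, f h ≠ 0 → b h = opp h := fun h h0 => by simp [b, h0]
    have hbinv : Function.Involutive b := by
      intro h
      by_cases h0 : f h = 0
      · have hh : h ∈ Z (tgt h) := (hmem _ _).2 ⟨rfl, h0⟩
        rw [hb0 _ h hh, hb0 _ _ (hτ _ h hh).1, (hτ _ h hh).2.1]
      · rw [hb1 h h0, hb1 _ (by rw [hc h]; simpa using h0), hinv h]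
    have hbne : ∀ h, b h ≠ h := by
      intro h
      by_cases h0 : f h = 0
      · have hh : h ∈ Z (tgt h) := (hmem _ _).2 ⟨rfl, h0⟩
        rw [hb0 _ h hh]
        exact (hτ _ h hh).2.2
      · rw [hb1 h h0]
        exact hfp h
    obtain ⟨s, hs, hsopp, hsb⟩ := exists_sign_of_involutions opp b hinv hbinv hfp hbne
    refine ⟨fun h => f h + if f h = 0 then s h else 0, ⟨fun h => ?_, fun h => ?_⟩, fun v => ?_⟩
    · by_cases h0 : f h = 0 <;> simp [hc h, h0, hsopp h]
    · rcases hv h with h0 | h0 | h0 <;> simp [h0, hs h]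
    · have hsum : ∑ h ∈ Z v, s h = 0 := by
        refine sum_involution (fun h _ => τ v h) (fun h hh => ?_) (fun h hh _ => (hτ v h hh).2.2)
          (fun h hh => (hτ v h hh).1) (fun h hh => (hτ v h hh).2.1)
        rw [← hb0 v h hh, hsb]
        ring
      rw [bd1_eq_sum_filter, sum_add_distrib, ← bd1_eq_sum_filter, hd v, ← sum_filter,
        filter_filter, hsum, add_zero]

end Paper
end

section
/- Fix a half-edge structure (V, H, opp, tgt). Let f and K be 1-chains. For every f-circulation c, ⟨c⟩(K) ≤ ⟨f⟩⁺(K + B⋆). (Lemma 15 of the paper.) -/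
/-!
A cycle `c` is orthogonal to every coboundary `R` (summation by parts, `sum_mul_cobound`), so
`⟨c⟩(K) = ⟨c⟩(K + R)`. Writing `L = K + R`, the two half-edges `h` and `opp h` of an edge
contribute equally to `Σ c L`, and since `c ⪯ f` the contribution `c h * L h` is at most the sum of
the contributions of `h` and `opp h` to `⟨f⟩⁺(L)` (`mul_le_term_add_term`). Summing over all
half-edges gives `2⟨c⟩(L) ≤ 2⟨f⟩⁺(L)`, and `⟨f⟩⁺(K + B⋆)` is the infimum of the right-hand sides.
-/

open Finset

namespace Paper

variable {V H F : Type*} [Fintype V] [Fintype H] [Fintype F]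
variable [DecidableEq V] [DecidableEq F]

theorem IsCobound.oneChain {opp : H → H} {tgt : H → V} (hinv : Function.Involutive opp)
    {R : H → ℤ} (hR : IsCobound opp tgt R) : OneChain opp R := by
  obtain ⟨z, hz⟩ := hR
  intro h
  rw [hz, hz, ← Finset.sum_neg_distrib]
  refine Finset.sum_congr rfl fun v _ => ?_
  simp only [coB, hinv h]
  ring

/-- Cycles are orthogonal to coboundaries. -/
theorem sum_mul_cobound {opp : H → H} {tgt : H → V} (hinv : Function.Involutive opp)
    {c R : H → ℤ} (hc : OneCycle opp tgt c) (hR : IsCobound opp tgt R) :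
    ∑ h, c h * R h = 0 := by
  obtain ⟨z, hz⟩ := hR
  obtain ⟨hanti, hbd⟩ := hc
  have key : ∀ v, ∑ h, c h * coB opp tgt v h = 0 := by
    intro v
    have h1 : ∑ h, c h * (if tgt h = v then 1 else 0) = 0 := by
      simpa [bd1] using hbd v
    -- reindexing along `opp` turns the source sum into minus the target sum
    have h2 : ∑ h, c h * (if tgt (opp h) = v then 1 else 0) = 0 := by
      rw [← Equiv.sum_comp hinv.toPerm]
      simp only [Function.Involutive.coe_toPerm, hinv _, hanti _, neg_mul,
        Finset.sum_neg_distrib, h1, neg_zero]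
    simp only [coB, mul_sub, Finset.sum_sub_distrib, h1, h2, sub_zero]
  simp only [hz, Finset.mul_sum]
  rw [Finset.sum_comm]
  refine Finset.sum_eq_zero fun v _ => ?_
  rw [← mul_zero (z v), ← key v, Finset.mul_sum]
  exact Finset.sum_congr rfl fun h _ => by ring

/-- The edgewise estimate: with `a, l, x` the values of `f, L, c` on a half-edge, the two summands
on the right are the terms of `⟨f⟩⁺(L)` at that half-edge and at its opposite. -/
theorem mul_le_term_add_term {a l x : ℤ} (hpos : 0 ≤ a → 0 ≤ x ∧ x ≤ a)
    (hneg : 0 ≤ -a → 0 ≤ -x ∧ -x ≤ -a) :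
    x * l ≤ (if 0 < a ∧ 0 < l then a * l else 0)
      + (if 0 < -a ∧ 0 < -l then -a * -l else 0) := by
  rcases lt_trichotomy a 0 with ha | rfl | ha
  · obtain ⟨h0, h1⟩ := hneg (by lia)
    rw [if_neg (by lia), zero_add]
    split_ifs with h <;> [skip; have hl : 0 ≤ l := by lia] <;> nlinarith
  · obtain rfl : x = 0 := by lia
    simp
  · obtain ⟨h0, h1⟩ := hpos ha.le
    rw [if_neg (c := 0 < -a ∧ 0 < -l) (by lia), add_zero]
    split_ifs with h <;> [skip; have hl : l ≤ 0 := by lia] <;> nlinarith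

theorem statement_7
    (opp : H → H) (tgt : H → V)
    (hinv : Function.Involutive opp) (hfp : ∀ h, opp h ≠ h)
    (f K : H → ℤ) (hf : OneChain opp f) (hK : OneChain opp K)
    (c : H → ℤ) (hc : IsCirc opp tgt f c) :
    pairing c K ≤ transplusB opp tgt f K := by
  obtain ⟨hcyc, hprec⟩ := hc
  refine le_csInf ⟨_, fun _ => 0, ⟨fun _ => 0, by simp⟩, rfl⟩ ?_
  rintro n ⟨R, hR, rfl⟩
  have hRanti := hR.oneChain hinv
  have hshift : ∑ h, c h * K h = ∑ h, c h * (K h + R h) := by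
    simp only [mul_add, Finset.sum_add_distrib, sum_mul_cobound hinv hcyc hR, add_zero]
  set g : H → ℤ := fun h => if 0 < f h ∧ 0 < K h + R h then f h * (K h + R h) else 0 with hg
  have hle : ∀ h, c h * (K h + R h) ≤ g h + g (opp h) := by
    intro h
    have hop := hprec (opp h)
    rw [hf h, hcyc.1 h] at hop
    have hL : K (opp h) + R (opp h) = -(K h + R h) := by rw [hK h, hRanti h]; ring
    simp only [hg, hf h, hL]
    exact mul_le_term_add_term (hprec h) hop
  have hsum := Finset.sum_le_sum fun h (_ : h ∈ Finset.univ) => hle h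
  have hswap : ∑ h, g (opp h) = ∑ h, g h := Equiv.sum_comp hinv.toPerm g
  rw [Finset.sum_add_distrib, hswap, ← hshift] at hsum
  change (∑ h, c h * K h) / 2 ≤ ∑ h, g h
  lia

end Paper
end

section
/- Fix a half-edge structure (V, H, opp, tgt). For all 1-chains f, K and K': ⟨f⟩⁺(K + K' + B⋆) ≤ ⟨f⟩⁺(K + B⋆) + ⟨f⟩⁺(K' + B⋆). (Observation 19 of the paper.) -/
/-!
Subadditivity of `⟨f⟩⁺` on cosets of the coboundaries. For fixed `f`, the map `⟨f⟩⁺` is subadditive,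
since each summand is a nonnegative multiple of the positive part of `K h` (`transplus_add_le`).
Choose coboundaries `R`, `R'` attaining the minima for `K` and `K'`
(`exists_transplusB_eq`). Then `R + R'` is again a coboundary, so it competes in the minimum for
`K + K'` and gives the bound.
-/

open Finset

namespace Paper

variable {V H F : Type*} [Fintype V] [Fintype H] [Fintype F]
variable [DecidableEq V] [DecidableEq F]

theorem transplus_nonneg (f K : H → ℤ) : 0 ≤ transplus f K := by
  refine Finset.sum_nonneg fun h _ => ?_
  split_ifs with hh
  · exact (mul_pos hh.1 hh.2).le
  · exact le_rfl

theorem transplus_add_le (f K L : H → ℤ) :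
    transplus f (fun h => K h + L h) ≤ transplus f K + transplus f L := by
  unfold transplus
  rw [← Finset.sum_add_distrib]
  refine Finset.sum_le_sum fun h _ => ?_
  by_cases hf : 0 < f h
  · simp only [hf, true_and]
    split_ifs <;> nlinarith
  · simp [hf]

theorem isCobound_zero (opp : H → H) (tgt : H → V) : IsCobound opp tgt (fun _ => 0) :=
  ⟨fun _ => 0, fun h => by simp⟩

theorem IsCobound.add {opp : H → H} {tgt : H → V} {R S : H → ℤ}
    (hR : IsCobound opp tgt R) (hS : IsCobound opp tgt S) :
    IsCobound opp tgt (fun h => R h + S h) := by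
  obtain ⟨z, hz⟩ := hR
  obtain ⟨w, hw⟩ := hS
  refine ⟨fun v => z v + w v, fun h => ?_⟩
  simp only [hz, hw, add_mul, Finset.sum_add_distrib]

/-- The set of competitors is bounded below, so the `sInf` in `transplusB` is not a junk value. -/
theorem bddBelow_transplus (opp : H → H) (tgt : H → V) (f K : H → ℤ) :
    BddBelow {n : ℤ | ∃ R : H → ℤ, IsCobound opp tgt R ∧
      n = transplus f (fun h => K h + R h)} := by
  refine ⟨0, ?_⟩
  rintro n ⟨R, -, rfl⟩
  exact transplus_nonneg _ _

theorem transplusB_le {opp : H → H} {tgt : H → V} (f K : H → ℤ) {R : H → ℤ}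
    (hR : IsCobound opp tgt R) :
    transplusB opp tgt f K ≤ transplus f (fun h => K h + R h) :=
  csInf_le (bddBelow_transplus opp tgt f K) ⟨R, hR, rfl⟩

/-- The minimum defining `transplusB` is attained. -/
theorem exists_transplusB_eq (opp : H → H) (tgt : H → V) (f K : H → ℤ) :
    ∃ R : H → ℤ, IsCobound opp tgt R ∧
      transplusB opp tgt f K = transplus f (fun h => K h + R h) :=
  have hne : {n : ℤ | ∃ R : H → ℤ, IsCobound opp tgt R ∧
      n = transplus f (fun h => K h + R h)}.Nonempty :=
    ⟨_, _, isCobound_zero opp tgt, rfl⟩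
  Int.csInf_mem hne (bddBelow_transplus opp tgt f K)

theorem statement_8
    (opp : H → H) (tgt : H → V)
    (hinv : Function.Involutive opp) (hfp : ∀ h, opp h ≠ h)
    (f K K' : H → ℤ) (hf : OneChain opp f) (hK : OneChain opp K)
    (hK' : OneChain opp K') :
    transplusB opp tgt f (fun h => K h + K' h) ≤
      transplusB opp tgt f K + transplusB opp tgt f K' := by
  obtain ⟨R, hR, hKR⟩ := exists_transplusB_eq opp tgt f K
  obtain ⟨R', hR', hKR'⟩ := exists_transplusB_eq opp tgt f K'
  calc transplusB opp tgt f (fun h => K h + K' h)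
      ≤ transplus f (fun h => (K h + K' h) + (R h + R' h)) := transplusB_le f _ (hR.add hR')
    _ = transplus f (fun h => (K h + R h) + (K' h + R' h)) := by
        simp only [add_add_add_comm]
    _ ≤ transplus f (fun h => K h + R h) + transplus f (fun h => K' h + R' h) :=
        transplus_add_le f _ _
    _ = transplusB opp tgt f K + transplusB opp tgt f K' := by rw [hKR, hKR']

end Paper
end

section
/- Fix a combinatorial map (V, H, F, opp, tgt, left). Assume that ∂₂x is a 1-cycle for every face x ∈ F, and that there are a finite index set Y, 1-cycles (f_e)_{e∈Y} and cocycles (K_e)_{e∈Y} with ⟨f_e⟩(K_{e'}) = 1 if e = e' and ⟨f_e⟩(K_{e'}) = 0 if e ≠ e'. Let S ⊆ F be nonempty, let x ∈ S, let P(y) be a copath from x to y for each y ∈ S with P(x) = 0, let a : Y → ℤ, and let a' : S → ℤ with a'(x) = 0. Then there exists a 1-cycle b such that ⟨b⟩(K_e) = a(e) for every e ∈ Y and ⟨b⟩(P(y)) = a'(y) for every y ∈ S. (Lemma 16 of the paper, with the properties of the homology bases of an orientable surface stated as explicit hypotheses.) -/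
/-!
Put `g = Σ_e a(e) f_e`, which by duality pairs correctly with every `K_e`, and correct it by
face boundaries: `b = g + Σ_{w ∈ S} (a'(w) - ⟨g⟩(P(w))) ∂₂w`. The adjunction
`⟨∂₂w⟩(K) = (∂⋆₁K)(w)` (`pairing_bd2`) shows that the correction pairs to zero with the cocycles
`K_e`, and with the copath `P(y)` to the difference of its coefficients at `y` and at `x`; the
latter coefficient vanishes since `a'(x) = 0` and `P(x) = 0`. Bilinearity of `pairing`, defined by
an integer division, holds on 1-chains because the divided sum is even (`two_mul_pairing`).
-/

open Finset

namespace Paper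

variable {V H F : Type*} [Fintype V] [Fintype H] [Fintype F]
variable [DecidableEq V] [DecidableEq F]

/-- `∂⋆₁ K : F → ℤ`. -/
def bdStar1 (left : H → F) (K : H → ℤ) (x : F) : ℤ :=
  ∑ h, if left h = x then K h else 0

/-- A cocycle: a 1-chain `K` with `∂⋆₁ K = 0`. -/
def Cocycle (opp : H → H) (left : H → F) (K : H → ℤ) : Prop :=
  OneChain opp K ∧ ∀ x, bdStar1 left K x = 0

/-- The 1-chain `∂₂ x`. -/
def bd2 (opp : H → H) (left : H → F) (x : F) : H → ℤ :=
  fun h => (if left h = x then 1 else 0) - (if left (opp h) = x then 1 else 0)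

/-- A 1-boundary: a ℤ-linear combination of the 1-chains `∂₂ x` for `x ∈ F`. -/
def IsBoundary1 (opp : H → H) (left : H → F) (b : H → ℤ) : Prop :=
  ∃ z : F → ℤ, ∀ h, b h = ∑ x, z x * bd2 opp left x h

/-- A copath from `x` to `y`: a 1-chain `P` with `∂⋆₁ P = y - x`. -/
def IsCopath (opp : H → H) (left : H → F) (x y : F) (P : H → ℤ) : Prop :=
  OneChain opp P ∧
  ∀ w, bdStar1 left P w = (if w = y then 1 else 0) - (if w = x then 1 else 0)

theorem OneCycle.add {opp : H → H} {tgt : H → V} {f g : H → ℤ}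
    (hf : OneCycle opp tgt f) (hg : OneCycle opp tgt g) : OneCycle opp tgt (f + g) := by
  refine ⟨fun h => ?_, fun v => ?_⟩
  · simp only [Pi.add_apply, hf.1 h, hg.1 h]
    ring
  · have h1 := hf.2 v
    have h2 := hg.2 v
    simp only [bd1, ← Finset.sum_filter] at *
    simp only [Pi.add_apply, Finset.sum_add_distrib, h1, h2, add_zero]

theorem OneCycle.sum {ι : Type*} {opp : H → H} {tgt : H → V} (s : Finset ι) (c : ι → ℤ)
    {g : ι → H → ℤ} (hg : ∀ i, OneCycle opp tgt (g i)) :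
    OneCycle opp tgt (fun h => ∑ i ∈ s, c i * g i h) := by
  refine ⟨fun h => ?_, fun v => ?_⟩
  · simp only [(hg _).1 h, mul_neg, Finset.sum_neg_distrib]
  · have h1 := fun i => (hg i).2 v
    simp only [bd1, ← Finset.sum_filter] at *
    rw [Finset.sum_comm]
    simp only [← Finset.mul_sum, h1, mul_zero, Finset.sum_const_zero]

theorem pairing_add {opp : H → H} (hinv : Function.Involutive opp)
    (hfp : ∀ h, opp h ≠ h) {tgt : H → V} {f g K : H → ℤ} (hf : OneCycle opp tgt f)
    (hg : OneCycle opp tgt g) (hK : OneChain opp K) :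
    pairing (f + g) K = pairing f K + pairing g K := by
  have h := two_mul_pairing hinv hfp (hf.add hg).1 hK
  simp only [Pi.add_apply, add_mul, Finset.sum_add_distrib,
    ← two_mul_pairing hinv hfp hf.1 hK, ← two_mul_pairing hinv hfp hg.1 hK] at h
  linarith

theorem pairing_sum {ι : Type*} {opp : H → H} (hinv : Function.Involutive opp)
    (hfp : ∀ h, opp h ≠ h) {tgt : H → V} (s : Finset ι) (c : ι → ℤ)
    {g : ι → H → ℤ} {K : H → ℤ} (hg : ∀ i, OneCycle opp tgt (g i)) (hK : OneChain opp K) :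
    pairing (fun h => ∑ i ∈ s, c i * g i h) K = ∑ i ∈ s, c i * pairing (g i) K := by
  have h := two_mul_pairing hinv hfp (OneCycle.sum s c hg).1 hK
  simp only [Finset.sum_mul] at h
  rw [Finset.sum_comm] at h
  simp only [mul_assoc, ← Finset.mul_sum, ← two_mul_pairing hinv hfp (hg _).1 hK,
    mul_left_comm _ (2 : ℤ)] at h
  linarith

/-- `∂₂` and `∂⋆₁` are adjoint: both halves of `∂₂ x` contribute `(∂⋆₁ K)(x)` to the sum
over half-edges, the second one after the substitution `h ↦ opp h`. -/
theorem pairing_bd2 {opp : H → H} (hinv : Function.Involutive opp) (left : H → F)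
    {K : H → ℤ} (hK : OneChain opp K) (x : F) :
    pairing (bd2 opp left x) K = bdStar1 left K x := by
  have h1 : ∑ h, (if left (opp h) = x then K h else 0) = - bdStar1 left K x := by
    rw [bdStar1, ← Finset.sum_neg_distrib]
    refine Fintype.sum_equiv hinv.toPerm _ _ fun h => ?_
    simp only [Function.Involutive.coe_toPerm, hK h]
    split_ifs <;> simp
  have h2 : ∑ h, bd2 opp left x h * K h = 2 * bdStar1 left K x := by
    simp only [bd2, sub_mul, ite_mul, one_mul, zero_mul, Finset.sum_sub_distrib, h1]
    rw [bdStar1]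
    ring
  rw [pairing, h2]
  exact Int.mul_ediv_cancel_left _ two_ne_zero

theorem statement_9
    (opp : H → H) (tgt : H → V) (left : H → F)
    (hinv : Function.Involutive opp) (hfp : ∀ h, opp h ≠ h)
    (hbd2 : ∀ x : F, OneCycle opp tgt (bd2 opp left x))
    {Y : Type*} [Fintype Y] [DecidableEq Y]
    (fe Ke : Y → H → ℤ)
    (hfe : ∀ e, OneCycle opp tgt (fe e))
    (hKe : ∀ e, Cocycle opp left (Ke e))
    (horth : ∀ e e', pairing (fe e) (Ke e') = if e = e' then 1 else 0)
    (S : Finset F) (hS : S.Nonempty) (x : F) (hx : x ∈ S)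
    (P : F → H → ℤ) (hP : ∀ y ∈ S, IsCopath opp left x y (P y)) (hPx : P x = 0)
    (a : Y → ℤ) (a' : F → ℤ) (ha'x : a' x = 0) :
    ∃ b : H → ℤ, OneCycle opp tgt b ∧ (∀ e, pairing b (Ke e) = a e) ∧
      ∀ y ∈ S, pairing b (P y) = a' y := by
  have hg := OneCycle.sum Finset.univ a hfe
  set g : H → ℤ := fun h => ∑ e, a e * fe e h with hgdef
  set c : F → ℤ := fun w => a' w - pairing g (P w) with hc
  have hr := OneCycle.sum S c hbd2
  -- the base face carries coefficient zero, so the term `-[w = x]` of `∂⋆₁ P(y)` is harmless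
  have hcx : c x = 0 := by simp [hc, ha'x, hPx, pairing]
  refine ⟨_, hg.add hr, fun e => ?_, fun y hy => ?_⟩
  · rw [pairing_add hinv hfp hg hr (hKe e).1, pairing_sum hinv hfp S c hbd2 (hKe e).1,
      hgdef, pairing_sum hinv hfp _ a hfe (hKe e).1]
    simp [horth, pairing_bd2 hinv left (hKe e).1, (hKe e).2]
  · rw [pairing_add hinv hfp hg hr (hP y hy).1, pairing_sum hinv hfp S c hbd2 (hP y hy).1]
    simp [pairing_bd2 hinv left (hP y hy).1, (hP y hy).2, mul_sub, Finset.sum_sub_distrib,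
      hy, hx, hcx]
    simp [hc]

end Paper
end

section
/- Fix a combinatorial map (V, H, F, opp, tgt, left) with F nonempty. Assume: (a) ∂₂x is a 1-cycle for every face x ∈ F; (b) there are a finite index set Y, 1-cycles (f_e)_{e∈Y} and cocycles (K_e)_{e∈Y} with ⟨f_e⟩(K_{e'}) = 1 if e = e' and 0 otherwise; (c) every cocycle D can be written as D = Σ_{e∈Y} z_e·K_e + R for some z ∈ ℤ^Y and coboundary R; (d) the dual graph (vertex set F, with an edge joining left(h) and left(opp h) for each h ∈ H) is connected; (e) every 1-cycle can be written as a 1-boundary plus a ℤ-linear combination of the (f_e)_{e∈Y}. Let c₀ and c be 1-cycles and let k be a positive integer. If c - k·c₀ is a 1-boundary, then there exist c-circulations c₁, …, c_k such that c = c₁ + … + c_k and c_i - c₀ is a 1-boundary for each i ∈ {1, …, k}. (Corollary 18 of the paper, with the properties of the homology bases of an orientable surface stated as explicit hypotheses.) -/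
/-!
Write `c = k·c₀ + Σ_x z_x·∂₂x` and put `c_i = c₀ + Σ_x ⌊(z_x + i)/k⌋·∂₂x` for `0 ≤ i < k`. Each `c_i`
is a 1-cycle homologous to `c₀`, and Hermite's identity `Σ_i ⌊(n + i)/k⌋ = n` gives `Σ_i c_i = c`.
At a half-edge `h`, the values are `c(h) = k·c₀(h) + a - b` and
`c_i(h) = ⌊(k·c₀(h) + a + i)/k⌋ - ⌊(b + i)/k⌋`, where `a` and `b` are the coefficients of `left h` and
`left (opp h)`. If `c(h) ≥ 0`, monotonicity of the floor makes every `c_i(h)` nonnegative; as they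
sum to `c(h)`, each is also at most `c(h)`.
-/

open Finset

namespace Paper

variable {V H F : Type*} [Fintype V] [Fintype H] [Fintype F]
variable [DecidableEq V] [DecidableEq F]

/-- Hermite's identity, for floor division in `ℤ`. -/
theorem sum_add_ediv (k : ℕ) (hk : 0 < k) (n : ℤ) :
    ∑ i : Fin k, (n + (i : ℤ)) / (k : ℤ) = n := by
  have hk' : (k : ℤ) ≠ 0 := by exact_mod_cast hk.ne'
  rw [Fin.sum_univ_eq_sum_range (fun i : ℕ => (n + (i : ℤ)) / (k : ℤ)) k]
  -- Replacing `n` by `n + 1` shifts the summation window, trading `n / k` for `(n + k) / k`.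
  have step : ∀ m : ℤ, ∑ i ∈ range k, (m + 1 + (i : ℤ)) / (k : ℤ)
      = ∑ i ∈ range k, (m + (i : ℤ)) / (k : ℤ) + 1 := by
    intro m
    have h1 := Finset.sum_range_succ (fun i : ℕ => (m + (i : ℤ)) / (k : ℤ)) k
    have h2 := Finset.sum_range_succ' (fun i : ℕ => (m + (i : ℤ)) / (k : ℤ)) k
    have h3 : (m + (k : ℤ)) / (k : ℤ) = m / k + 1 := by
      simpa using Int.add_mul_ediv_right m 1 hk'
    have h4 : ∑ i ∈ range k, (m + 1 + (i : ℤ)) / (k : ℤ)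
        = ∑ i ∈ range k, (m + ((i + 1 : ℕ) : ℤ)) / (k : ℤ) :=
      Finset.sum_congr rfl fun i _ => by congr 1; push_cast; ring
    simp only [Nat.cast_zero, add_zero] at h2
    rw [h4]
    linarith
  induction n using Int.induction_on with
  | zero =>
    refine Finset.sum_eq_zero fun i hi => ?_
    rw [zero_add]
    exact Int.ediv_eq_zero_of_lt (by positivity) (by exact_mod_cast Finset.mem_range.mp hi)
  | succ i ih => rw [step, ih]
  | pred i ih =>
    have := step (-(i : ℤ) - 1)
    rw [sub_add_cancel, ih] at this
    linarith

theorem sum_mul_bd2 (opp : H → H) (left : H → F) (z : F → ℤ) (h : H) :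
    ∑ x, z x * bd2 opp left x h = z (left h) - z (left (opp h)) := by
  simp [bd2, mul_sub, Finset.sum_sub_distrib]

theorem oneCycle_add_boundary (opp : H → H) (tgt : H → V) (left : H → F)
    (hbd2 : ∀ x : F, OneCycle opp tgt (bd2 opp left x))
    (c₀ : H → ℤ) (hc₀ : OneCycle opp tgt c₀) (z : F → ℤ) :
    OneCycle opp tgt (fun h => c₀ h + ∑ x, z x * bd2 opp left x h) := by
  refine ⟨fun h => ?_, fun v => ?_⟩
  · simp only [hc₀.1 h, (hbd2 _).1 h, mul_neg, Finset.sum_neg_distrib]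
    ring
  · have h0 := hc₀.2 v
    have hb : ∀ x, ∑ h, (if tgt h = v then bd2 opp left x h else 0) = 0 := fun x => (hbd2 x).2 v
    unfold bd1 at h0 ⊢
    simp only [← Finset.sum_filter] at h0 hb ⊢
    rw [Finset.sum_add_distrib, h0, Finset.sum_comm]
    simp [← Finset.mul_sum, hb]

theorem statement_11
    (opp : H → H) (tgt : H → V) (left : H → F) [Nonempty F]
    (hinv : Function.Involutive opp) (hfp : ∀ h, opp h ≠ h)
    (hbd2 : ∀ x : F, OneCycle opp tgt (bd2 opp left x))
    {Y : Type*} [Fintype Y] [DecidableEq Y]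
    (fe Ke : Y → H → ℤ)
    (hfe : ∀ e, OneCycle opp tgt (fe e))
    (hKe : ∀ e, Cocycle opp left (Ke e))
    (horth : ∀ e e', pairing (fe e) (Ke e') = if e = e' then 1 else 0)
    (hgen : ∀ D : H → ℤ, Cocycle opp left D →
      ∃ (z : Y → ℤ) (R : H → ℤ), IsCobound opp tgt R ∧
        ∀ h, D h = (∑ e, z e * Ke e h) + R h)
    (hconn : ∀ x y : F,
      Relation.ReflTransGen (fun a b => ∃ h, left h = a ∧ left (opp h) = b) x y)
    (hcycgen : ∀ g : H → ℤ, OneCycle opp tgt g →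
      ∃ (z : Y → ℤ) (b : H → ℤ), IsBoundary1 opp left b ∧
        ∀ h, g h = b h + ∑ e, z e * fe e h)
    (c₀ c : H → ℤ) (hc₀ : OneCycle opp tgt c₀) (hc : OneCycle opp tgt c)
    (k : ℕ) (hk : 0 < k)
    (hdiff : IsBoundary1 opp left (fun h => c h - (k : ℤ) * c₀ h)) :
    ∃ cs : Fin k → H → ℤ,
      (∀ i, IsCirc opp tgt c (cs i)) ∧
      (∀ h, c h = ∑ i, cs i h) ∧
      (∀ i, IsBoundary1 opp left (fun h => cs i h - c₀ h)) := by
  obtain ⟨z, hz⟩ := hdiff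
  have hk' : (0 : ℤ) < k := by exact_mod_cast hk
  let cs : Fin k → H → ℤ := fun i h =>
    c₀ h + ∑ x, ((z x + (i : ℤ)) / (k : ℤ)) * bd2 opp left x h
  have hcs : ∀ i h, cs i h = c₀ h + ((z (left h) + (i : ℤ)) / (k : ℤ)
      - (z (left (opp h)) + (i : ℤ)) / (k : ℤ)) := fun i h =>
    congrArg (c₀ h + ·) (sum_mul_bd2 opp left (fun x => (z x + (i : ℤ)) / (k : ℤ)) h)
  have hch : ∀ h, c h - (k : ℤ) * c₀ h = z (left h) - z (left (opp h)) := fun h =>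
    (hz h).trans (sum_mul_bd2 opp left z h)
  have hsum : ∀ h, c h = ∑ i, cs i h := by
    intro h
    simp only [hcs, Finset.sum_add_distrib, Finset.sum_sub_distrib, sum_add_ediv k hk]
    have := hch h
    simp only [Finset.sum_const, Finset.card_univ, Fintype.card_fin, nsmul_eq_mul]
    linarith
  have hnonneg : ∀ h, 0 ≤ c h → ∀ i, 0 ≤ cs i h := by
    intro h hh i
    rw [hcs]
    have h1 : (z (left h) + (i : ℤ) + c₀ h * k) / (k : ℤ)
        = (z (left h) + (i : ℤ)) / (k : ℤ) + c₀ h := Int.add_mul_ediv_right _ _ hk'.ne'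
    have h2 : (z (left (opp h)) + (i : ℤ)) / (k : ℤ)
        ≤ (z (left h) + (i : ℤ) + c₀ h * k) / (k : ℤ) :=
      Int.ediv_le_ediv hk' (by linarith [hch h])
    linarith
  refine ⟨cs, fun i => ⟨oneCycle_add_boundary opp tgt left hbd2 c₀ hc₀ _, fun h hh =>
    ⟨hnonneg h hh i, ?_⟩⟩, hsum, fun i => ⟨fun x => (z x + (i : ℤ)) / (k : ℤ), fun h => ?_⟩⟩
  · rw [hsum h]
    exact Finset.single_le_sum (f := fun j => cs j h) (fun j _ => hnonneg h hh j)
      (Finset.mem_univ i)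
  · exact add_sub_cancel_left _ _

end Paper
end

section
/- Fix a combinatorial map (V, H, F, opp, tgt, left). Let K be a cocycle that is not a coboundary. Then there exist k ≥ 1 and half-edges h₁, …, h_k ∈ H with K(h_i) > 0 for each i, with the faces left(h₁), …, left(h_k) pairwise distinct, and with left(opp h_{i+1}) = left(h_i) for all i (indices modulo k), such that the 1-chain K' defined by K'(h_i) = 1 and K'(opp h_i) = -1 for each i and K'(h) = 0 for all other h ∈ H satisfies: K' is a cocycle, K' ⪯ K, and K' is not a coboundary. (The combinatorial content of Observation 29 of the paper: every cocycle that is not a coboundary contains the cocycle of a non-separating directed cycle of the dual graph.) -/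
/-!
A nonzero cocycle `K` contains a directed dual cycle. By conservation at each face, a half-edge
`h` with `K h > 0` can be continued: some half-edge `h'` with `K h' > 0` has
`left (opp h') = left h`. Choosing one such continuation per face gives a self-map of a finite set
of faces, and a periodic orbit of this map is a simple directed cycle whose 1-chain `K'` is a
cocycle with `K' ⪯ K` (`exists_dicycle`).

If `K'` is not a coboundary, it is the required cycle. Otherwise `K - K'` is again a cocycle that
is not a coboundary, it satisfies `K - K' ⪯ K`, and its `ℓ¹`-norm is strictly smaller than that of
`K`. So induction on the norm applies, and a cycle contained in `K - K'` is contained in `K`.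
-/

open Finset

namespace Paper

variable {V H F : Type*} [Fintype V] [Fintype H] [Fintype F]
variable [DecidableEq V] [DecidableEq F]

/-- The half-edges `e 0, …, e (k - 1)` form a simple directed cycle of the dual graph along which
`K` is positive, and `K'` is the 1-chain of this cycle; moreover `K'` is a cocycle with
`K' ⪯ K`. -/
def IsDicycle (opp : H → H) (left : H → F) (K : H → ℤ) (k : ℕ) (hk : 0 < k) (e : Fin k → H)
    (K' : H → ℤ) : Prop :=
  (∀ i, 0 < K (e i)) ∧
  Function.Injective (fun i => left (e i)) ∧
  (∀ i : Fin k, left (opp (e ⟨((i : ℕ) + 1) % k, Nat.mod_lt _ hk⟩)) = left (e i)) ∧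
  (∀ i, K' (e i) = 1 ∧ K' (opp (e i)) = -1) ∧
  (∀ h, (∀ i, e i ≠ h) → (∀ i, opp (e i) ≠ h) → K' h = 0) ∧
  Cocycle opp left K' ∧ Prec K' K

/-- A directed walk along half-edges positive for the cocycle `K` never gets stuck. -/
lemma exists_next {opp : H → H} {left : H → F} {K : H → ℤ} (hinv : Function.Involutive opp)
    (hK : Cocycle opp left K) {h : H} (hh : 0 < K h) :
    ∃ h', 0 < K h' ∧ left (opp h') = left h := by
  by_contra! hcon
  have hsum := hK.2 (left h)
  unfold bdStar1 at hsum
  have hnonneg : ∀ g ∈ (univ : Finset H), 0 ≤ if left g = left h then K g else 0 := by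
    intro g _
    split_ifs with hg
    · by_contra! hneg
      have hpos : 0 < K (opp g) := by rw [hK.1 g]; omega
      exact hcon (opp g) hpos (by rw [hinv g, hg])
    · exact le_rfl
  have := (sum_eq_zero_iff_of_nonneg hnonneg).1 hsum h (mem_univ h)
  simp at this
  omega

/-- A self-map of a nonempty finite type has a periodic point. -/
lemma exists_periodic {α : Type*} [Finite α] (f : α → α) (a : α) :
    ∃ x, 0 < Function.minimalPeriod f x := by
  obtain ⟨m, n, hmn, heq⟩ := Finite.exists_ne_map_eq_of_infinite (fun n : ℕ => f^[n] a)
  wlog hlt : m < n generalizing m n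
  · exact this n m hmn.symm heq.symm (by omega)
  refine ⟨f^[m] a, Function.IsPeriodicPt.minimalPeriod_pos (n := n - m) (by omega) ?_⟩
  have : f^[n - m] (f^[m] a) = f^[m] a := by
    rw [← Function.iterate_add_apply, Nat.sub_add_cancel hlt.le]
    exact heq.symm
  exact this

lemma exists_dicycle {opp : H → H} {left : H → F} {K : H → ℤ} (hinv : Function.Involutive opp)
    (hK : Cocycle opp left K) {h₀ : H} (h₀pos : 0 < K h₀) :
    ∃ (k : ℕ) (hk : 0 < k) (e : Fin k → H) (K' : H → ℤ), IsDicycle opp left K k hk e K' := by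
  classical
  let S := {x : F // ∃ h, 0 < K h ∧ left h = x}
  have hnext : ∀ x : S, ∃ h', 0 < K h' ∧ left (opp h') = x.1 := by
    rintro ⟨x, h, hh, rfl⟩
    exact exists_next hinv hK hh
  choose n hnpos hnleft using hnext
  let φ : S → S := fun x => ⟨left (n x), n x, hnpos x, rfl⟩
  obtain ⟨x, hx⟩ := exists_periodic φ ⟨left h₀, h₀, h₀pos, rfl⟩
  let k := Function.minimalPeriod φ x
  have hk : 0 < k := hx
  let e : Fin k → H := fun i => n (φ^[i] x)
  have he_left : ∀ i, left (e i) = (φ^[(i : ℕ) + 1] x).1 := by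
    intro i
    rw [Function.iterate_succ_apply']
  have he_pos : ∀ i, 0 < K (e i) := fun i => hnpos _
  have he_opp : ∀ i j, opp (e i) ≠ e j := by
    intro i j hij
    have h1 := hK.1 (e i)
    have h2 := he_pos i
    have h3 := he_pos j
    rw [hij] at h1
    omega
  -- The faces `left (e i) = φ^[i + 1] x` are distinct, since `φ x` has the same minimal period.
  have hinj : Function.Injective (fun i => left (e i)) := by
    intro i j hij
    simp only [he_left] at hij
    have hij' : φ^[(i : ℕ)] (φ x) = φ^[(j : ℕ)] (φ x) := by
      rw [← Function.iterate_succ_apply, ← Function.iterate_succ_apply]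
      exact Subtype.ext hij
    have hper : Function.minimalPeriod φ (φ x) = k :=
      Function.minimalPeriod_apply (Function.minimalPeriod_pos_iff_mem_periodicPts.1 hx)
    apply Fin.ext
    exact Function.iterate_injOn_Iio_minimalPeriod (f := φ) (x := φ x)
      (by rw [Set.mem_Iio, hper]; exact i.2) (by rw [Set.mem_Iio, hper]; exact j.2) hij'
  have heinj : Function.Injective e := fun i j hij => hinj (congrArg left hij)
  let K' : H → ℤ := fun h =>
    ∑ i, ((if e i = h then 1 else 0) - (if opp (e i) = h then 1 else 0))
  have hchain : OneChain opp K' := by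
    intro h
    simp only [K', ← sum_neg_distrib]
    refine sum_congr rfl fun i _ => ?_
    have h1 : e i = opp h ↔ opp (e i) = h :=
      ⟨fun H => by rw [H, hinv], fun H => by rw [← H, hinv]⟩
    have h2 : opp (e i) = opp h ↔ e i = h := hinv.injective.eq_iff
    simp only [h1, h2, neg_sub]
  have hKe : ∀ i, K' (e i) = 1 := by
    intro i
    simp only [K', he_opp, heinj.eq_iff, if_false, sub_zero, sum_boole, Nat.cast_eq_one]
    exact card_eq_one.2 ⟨i, by ext; simp⟩
  have hsupp : ∀ h, (∀ i, e i ≠ h) → (∀ i, opp (e i) ≠ h) → K' h = 0 := by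
    intro h h1 h2
    simp [K', h1, h2]
  refine ⟨k, hk, e, K', he_pos, hinj, ?_, ?_, hsupp, ⟨hchain, ?_⟩, ?_⟩
  · intro i
    rw [he_left]
    simp only [e, hnleft]
    rw [Function.iterate_mod_minimalPeriod_eq]
  · exact fun i => ⟨hKe i, by rw [hchain, hKe]⟩
  · intro y
    have hswap : bdStar1 left K' y
        = ∑ i : Fin k, ((if left (e i) = y then (1 : ℤ) else 0)
            - (if left (opp (e i)) = y then 1 else 0)) := by
      have hpush : ∀ h, (if left h = y then K' h else 0)
          = ∑ i, (if left h = y then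
              ((if e i = h then (1 : ℤ) else 0) - (if opp (e i) = h then 1 else 0)) else 0) := by
        intro h
        split_ifs <;> simp [K']
      unfold bdStar1
      simp_rw [hpush]
      rw [sum_comm]
      refine sum_congr rfl fun i _ => ?_
      rw [← sum_filter, sum_sub_distrib]
      simp
    -- The inflow and outflow at `y` telescope along the periodic orbit of `x`.
    let g : ℕ → ℤ := fun i => if (φ^[i] x).1 = y then 1 else 0
    rw [hswap]
    have hg : ∀ i : Fin k, ((if left (e i) = y then (1 : ℤ) else 0)
            - (if left (opp (e i)) = y then 1 else 0)) = g (i + 1) - g i := by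
      intro i
      simp only [he_left, g]
      simp only [e, hnleft]
    rw [sum_congr rfl fun i _ => hg i, Fin.sum_univ_eq_sum_range (fun i => g (i + 1) - g i) k,
      sum_range_sub]
    simp only [g, k, Function.iterate_minimalPeriod, Function.iterate_zero, id]
    exact sub_self _
  · intro h hh
    by_cases h1 : ∃ i, e i = h
    · obtain ⟨i, rfl⟩ := h1
      have := he_pos i
      rw [hKe]
      omega
    · push Not at h1
      rw [hsupp h h1]
      · exact ⟨le_rfl, hh⟩
      · intro i hi
        have h2 := hK.1 (e i)
        have h3 := he_pos i
        rw [hi] at h2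
        omega

lemma exists_noncobound_dicycle {opp : H → H} {tgt : H → V} {left : H → F}
    (hinv : Function.Involutive opp) (N : ℕ) :
    ∀ K : H → ℤ, ∑ h, (K h).natAbs = N → Cocycle opp left K → ¬ IsCobound opp tgt K →
      ∃ (k : ℕ) (hk : 0 < k) (e : Fin k → H) (K' : H → ℤ),
        IsDicycle opp left K k hk e K' ∧ ¬ IsCobound opp tgt K' := by
  induction N using Nat.strong_induction_on with
  | _ N ih =>
  intro K hN hK hnb
  have hpos : ∃ h, 0 < K h := by
    by_contra! hcon
    refine hnb ⟨0, fun h => ?_⟩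
    have h1 := hcon h
    have h2 := hcon (opp h)
    rw [hK.1] at h2
    simp
    omega
  obtain ⟨h₀, h₀pos⟩ := hpos
  obtain ⟨k, hk, e, C, hC⟩ := exists_dicycle hinv hK h₀pos
  by_cases hCb : IsCobound opp tgt C
  swap
  · exact ⟨k, hk, e, C, hC, hCb⟩
  obtain ⟨hCpos, -, -, hCe, -, hCc, hCK⟩ := hC
  let L : H → ℤ := fun h => K h - C h
  have hL : Cocycle opp left L := by
    refine ⟨fun h => ?_, fun x => ?_⟩
    · simp only [L, hK.1 h, hCc.1 h]
      ring
    · have h1 := hK.2 x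
      have h2 := hCc.2 x
      unfold bdStar1 at *
      refine Eq.trans ?_ (sub_eq_zero.2 (h1.trans h2.symm))
      rw [← sum_sub_distrib]
      refine sum_congr rfl fun h _ => ?_
      split_ifs <;> simp [L]
  have hLb : ¬ IsCobound opp tgt L := by
    rintro ⟨z, hz⟩
    obtain ⟨w, hw⟩ := hCb
    refine hnb ⟨fun v => z v + w v, fun h => ?_⟩
    simp only [add_mul, sum_add_distrib, ← hz, ← hw, L]
    ring
  have habs : ∀ h, (L h).natAbs ≤ (K h).natAbs := by
    intro h
    have h1 := hCK h
    have h2 := hCK (opp h)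
    rw [hK.1, hCc.1] at h2
    simp only [L]
    omega
  have hlt : ∑ h, (L h).natAbs < N := by
    rw [← hN]
    refine sum_lt_sum (fun h _ => habs h) ⟨e ⟨0, hk⟩, mem_univ _, ?_⟩
    have h1 := hCpos ⟨0, hk⟩
    have h2 := (hCe ⟨0, hk⟩).1
    simp only [L]
    omega
  obtain ⟨k', hk', e', K', ⟨hp, hi, ha, hv, hs, hc, hle⟩, hb⟩ := ih _ hlt L rfl hL hLb
  refine ⟨k', hk', e', K', ⟨fun i => ?_, hi, ha, hv, hs, hc, fun h hh => ?_⟩, hb⟩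
  · have h1 := hp i
    have h2 := hCK (opp (e' i))
    rw [hK.1, hCc.1] at h2
    simp only [L] at h1
    omega
  · have h1 := hCK h hh
    have h2 := hle h
    simp only [L] at h2
    omega

theorem statement_13
    (opp : H → H) (tgt : H → V) (left : H → F)
    (hinv : Function.Involutive opp) (hfp : ∀ h, opp h ≠ h)
    (K : H → ℤ) (hK : Cocycle opp left K) (hnb : ¬ IsCobound opp tgt K) :
    ∃ (k : ℕ) (hk : 0 < k) (e : Fin k → H),
      (∀ i, 0 < K (e i)) ∧
      Function.Injective (fun i => left (e i)) ∧
      (∀ i : Fin k, left (opp (e ⟨((i : ℕ) + 1) % k, Nat.mod_lt _ hk⟩)) = left (e i)) ∧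
      ∃ K' : H → ℤ,
        (∀ i, K' (e i) = 1 ∧ K' (opp (e i)) = -1) ∧
        (∀ h, (∀ i, e i ≠ h) → (∀ i, opp (e i) ≠ h) → K' h = 0) ∧
        Cocycle opp left K' ∧ Prec K' K ∧ ¬ IsCobound opp tgt K' := by
  obtain ⟨k, hk, e, K', ⟨hp, hi, ha, hv, hs, hc, hle⟩, hb⟩ :=
    exists_noncobound_dicycle hinv _ K rfl hK hnb
  exact ⟨k, hk, e, hp, hi, ha, K', hv, hs, hc, hle, hb⟩

end Paper
end

section
/- Fix a combinatorial map (V, H, F, opp, tgt, left). Let (K_e)_{e∈Y} be a finite family of 1-chains, let f be a 1-chain, let S ⊆ F be nonempty, let x ∈ S, and let P(y) be a copath from x to y for each y ∈ S with P(x) = 0. Suppose (a, a') ∈ ℝ^Y × ℝ^S satisfies a'(x) = 0 and, for all z ∈ ℤ^Y and all y, y' ∈ S, Σ_{e∈Y} z_e·a(e) + a'(y') - a'(y) ≤ ⟨f⟩⁺(Σ_{e∈Y} z_e·K_e + P(y') - P(y) + B⋆). Then for every e ∈ Y, -⟨f⟩⁺(-K_e) ≤ a(e) ≤ ⟨f⟩⁺(K_e),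 and for every y ∈ S, -⟨f⟩⁺(-P(y)) ≤ a'(y) ≤ ⟨f⟩⁺(P(y)). (Lemma 25(b) of the paper: coordinate bounds on the polytope of allowed homologies.) -/
/-!
Taking the zero coboundary gives `⟨f⟩⁺(K + B⋆) ≤ ⟨f⟩⁺(K)` (`transplusB_le_transplus`), so every
defining inequality of the polytope holds with `⟨f⟩⁺(K)` on the right. The bounds on `a e` are the
cases `z = ±1_e`, `y = y' = x`; the bounds on `a' y` are the cases `z = 0` with
`(x, y)` and `(y, x)` as the pair of faces, using `P x = 0` and `a' x = 0`.
-/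

open Finset

namespace Paper

variable {V H F : Type*} [Fintype V] [Fintype H] [Fintype F]
variable [DecidableEq V] [DecidableEq F]

/-- The minimum over `K + B⋆` is at most the value at the zero coboundary; `⟨f⟩⁺ ≥ 0` makes the
set bounded below, so that the integer `sInf` is a genuine minimum. -/
theorem transplusB_le_transplus (opp : H → H) (tgt : H → V) (f K : H → ℤ) :
    transplusB opp tgt f K ≤ transplus f K := by
  refine csInf_le ⟨0, ?_⟩ ⟨0, ⟨0, fun h => by simp⟩, by simp⟩
  rintro n ⟨R, -, rfl⟩
  refine Finset.sum_nonneg fun h _ => ?_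
  split_ifs with hh
  · exact (mul_pos hh.1 hh.2).le
  · exact le_rfl

theorem statement_14
    (opp : H → H) (tgt : H → V) (left : H → F)
    (hinv : Function.Involutive opp) (hfp : ∀ h, opp h ≠ h)
    {Y : Type*} [Fintype Y]
    (Ke : Y → H → ℤ) (hKe : ∀ e, OneChain opp (Ke e))
    (f : H → ℤ) (hf : OneChain opp f)
    (S : Finset F) (hS : S.Nonempty) (x : F) (hx : x ∈ S)
    (P : F → H → ℤ) (hP : ∀ y ∈ S, IsCopath opp left x y (P y)) (hPx : P x = 0)
    (a : Y → ℝ) (a' : F → ℝ) (ha'x : a' x = 0)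
    (hmem : ∀ z : Y → ℤ, ∀ y ∈ S, ∀ y' ∈ S,
      (∑ e, (z e : ℝ) * a e) + a' y' - a' y ≤
        (transplusB opp tgt f (fun h => (∑ e, z e * Ke e h) + P y' h - P y h) : ℝ)) :
    (∀ e, -(transplus f (fun h => - Ke e h) : ℝ) ≤ a e ∧
      a e ≤ (transplus f (Ke e) : ℝ)) ∧
    (∀ y ∈ S, -(transplus f (fun h => - P y h) : ℝ) ≤ a' y ∧
      a' y ≤ (transplus f (P y) : ℝ)) := by
  classical
  have key : ∀ z : Y → ℤ, ∀ y ∈ S, ∀ y' ∈ S,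
      (∑ e, (z e : ℝ) * a e) + a' y' - a' y ≤
        (transplus f (fun h => (∑ e, z e * Ke e h) + P y' h - P y h) : ℝ) :=
    fun z y hy y' hy' => (hmem z y hy y' hy').trans
      (by exact_mod_cast transplusB_le_transplus opp tgt f _)
  refine ⟨fun e => ⟨?_, ?_⟩, fun y hy => ⟨?_, ?_⟩⟩
  · have h := key (fun i => if i = e then -1 else 0) x hx x hx
    simp [ite_mul] at h
    linarith
  · have h := key (fun i => if i = e then 1 else 0) x hx x hx
    simpa [ite_mul] using h
  · have h := key 0 y hy x hx
    simp [hPx, ha'x] at h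
    linarith
  · have h := key 0 x hx y hy
    simpa [hPx, ha'x] using h

end Paper
end

section
/- Let P ⊆ ℝ² be the convex hull of a nonempty finite set of points each of whose coordinates is an integer multiple of 1/3. If P contains no point of ℤ², then w(P) < 2; that is, there exists c ∈ ℤ² \ {0} such that max_{a∈P} ⟨c, a⟩ - min_{a∈P} ⟨c, a⟩ < 2. (Lemma 35 of the paper: a hollow 1/3-integral polytope in the plane has lattice width less than 2.) -/
/-!
Scale by `3`: the polytope becomes the convex hull of a finite set `A` of integer points that misses
`3ℤ²`, and a direction of width at most `5` is wanted, since `5 / 3 < 2` (`exists_direction`).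

Suppose every nonzero direction has width at least `6`, and let `c` be a primitive direction of
minimal width `w`, attained by a bottom point `b` and a top point `t`. Choose coordinates in which
`c` is the direction `y`, the horizontal displacement `d` from `b` to `t` satisfies `0 ≤ 2 * d ≤ w`,
and `b` is one of the nine points of `[6, 9) × [0, 3)` (`reduced_frame_false`).

A point of `A` far from the segment from `b` to `t` would span with it a triangle having a horizontal
chord of length at least `3` at a height divisible by `3`, and hence containing a point of `3ℤ²`.
So all points of `A` are at horizontal distance less than `3 * w / (w - 3) ≤ 6` from that segment
(`excess_lt_right`, `excess_gt_left`). As the width in the direction `x` is at least `w` by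
minimality, this forces `w ≤ 14`. Only finitely many configurations remain: for each position of
`b` and `t`, two points realising width `w` in the direction `x`, and two points realising width `6`
in the direction `x - y`. The computation `checkW_all` shows that among these six points there is
always a triangle containing a point of `3ℤ²` (`reduced_false`).
-/

open Finset

namespace HollowWidth

/-! ### The finite check -/

/-- Nonnegative orientation: `c` lies on or to the left of the directed line from `a` to `b`.
The determinant is split into its positive and negative terms so that only natural numbers occur,
which keeps kernel evaluation fast. -/
def ccw (a b c : ℕ × ℕ) : Bool :=
  Nat.ble (a.2 * b.1 + b.2 * c.1 + c.2 * a.1) (a.1 * b.2 + b.1 * c.2 + c.1 * a.2)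

/-- `p, q, r` is a nondegenerate counterclockwise triangle and `z` lies in it. -/
def inTri (p q r z : ℕ × ℕ) : Bool :=
  !ccw q p r && (ccw p q z && (ccw q r z && ccw r p z))

/-- The `j < 6` for which the line `y = 3 * j` meets the strip `b₂ ≤ y ≤ b₂ + w`; for `b₂ < 3` and
`w ≤ 14` no larger `j` occurs. -/
def rows (w b₂ : ℕ) : List ℕ :=
  (List.range 6).filter fun j => Nat.ble b₂ (3 * j) && Nat.ble (3 * j) (b₂ + w)

/-- On each line of `rows`, the last point of `3ℤ²` on or to the left of the segment from
`(b₁, b₂)` to `(b₁ + d, b₂ + w)`. -/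
def latLeft (w b₁ b₂ d : ℕ) : List (ℕ × ℕ) :=
  (rows w b₂).map fun j => (3 * ((b₁ * w + d * (3 * j - b₂)) / (3 * w)), 3 * j)

/-- On each line of `rows`, the first point of `3ℤ²` on or to the right of the segment from
`(b₁, b₂)` to `(b₁ + d, b₂ + w)`. -/
def latRight (w b₁ b₂ d : ℕ) : List (ℕ × ℕ) :=
  (rows w b₂).map fun j => (3 * ((b₁ * w + d * (3 * j - b₂) + 3 * w - 1) / (3 * w)), 3 * j)

/-- The points of the strip `b₂ ≤ y ≤ b₂ + w` at horizontal distance about `6` or less from the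
segment from `(b₁, b₂)` to `(b₁ + d, b₂ + w)`; see `exists_mem_candidates`. -/
def candidates (w b₁ b₂ d : ℕ) : List (ℕ × ℕ) :=
  (List.range (w + 1)).flatMap fun i =>
    (List.range 12).map fun k => (b₁ + d * i / w + k - 5, b₂ + i)

/-- The triangle spanned by the segment from `b` to `t` and the point `p` contains none of the
lattice points listed for the side of the segment on which `p` lies. -/
def feasible (b t : ℕ × ℕ) (zl zr : List (ℕ × ℕ)) (p : ℕ × ℕ) : Bool :=
  bif ccw b t p then zl.all fun z => !inTri b t p z
  else zr.all fun z => !inTri b p t z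

/-- Some triangle with vertices in `L` contains a point of `zs`. -/
def hit (zs L : List (ℕ × ℕ)) : Bool :=
  L.any fun p => L.any fun q => L.any fun r => zs.any fun z => inTri p q r z

/-- `p` lies so far to the right of the segment that it can be the right end of a horizontal extent
of at least `w`. The other end is less than `3 * w / (w - 3)` to the left of the segment, and the
segment itself contributes at most `d`; denominators are cleared. -/
def farRight (w b₁ b₂ d : ℕ) (p : ℕ × ℕ) : Bool :=
  Nat.ble ((w - d) * w * (w - 3) + (w - 3) * (b₁ * w + d * (p.2 - b₂)))
   (3 * w * w + (w - 3) * (p.1 * w))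

/-- The mirror image of `farRight`. -/
def farLeft (w b₁ b₂ d : ℕ) (p : ℕ × ℕ) : Bool :=
  Nat.ble ((w - d) * w * (w - 3) + (w - 3) * (p.1 * w))
   (3 * w * w + (w - 3) * (b₁ * w + d * (p.2 - b₂)))

/-- Certifies that no hollow set contains `(b₁, b₂)` and `(b₁ + d, b₂ + w)`, lies in the strip
`b₂ ≤ y ≤ b₂ + w`, and has width at least `w` in the direction `x` (attained by `p` and `q`) and at
least `6` in the direction `x - y` (attained by `r` and `s`): some triangle on these six points
contains a point of `3ℤ²`. -/
def check (w b₁ b₂ d : ℕ) : Bool :=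
  let b := (b₁, b₂)
  let t := (b₁ + d, b₂ + w)
  let zl := latLeft w b₁ b₂ d
  let zr := latRight w b₁ b₂ d
  let B := candidates w b₁ b₂ d
  let F := B.filter (feasible b t zl zr)
  let R := B.filter fun p => farRight w b₁ b₂ d p && feasible b t zl zr p
  let L := B.filter fun p => farLeft w b₁ b₂ d p && feasible b t zl zr p
  R.all fun p => L.all fun q => Nat.blt p.1 (q.1 + w) ||
    F.all fun r => F.all fun s => Nat.blt (r.1 + s.2) (s.1 + r.2 + 6) ||
      hit (zl ++ zr) [b, t, p, q, r, s]

/-- `check` for all normalised positions with given `w`. The disjunct with `Nat.ble` discards the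
`d` for which width `w` in the direction `x` is already impossible by `excess_lt_right` and
`excess_gt_left`. -/
def checkW (w : ℕ) : Bool :=
  (List.range 3).all fun b₁ => (List.range 3).all fun b₂ => (List.range (w / 2 + 1)).all fun d =>
    Nat.ble (6 * w) ((w - d) * (w - 3)) || check w (b₁ + 6) b₂ d

theorem checkW_all : ((List.range 9).all fun i => checkW (i + 6)) = true := by
  decide +kernel

/-! ### Hollow sets of lattice points -/

/-- The convex hull of `A` contains no point of `3ℤ²`. By the theorem of Carathéodory triangles suffice,
and as everything is rational the barycentric weights may be taken to be integers. -/
def Hollow (A : Set (ℤ × ℤ)) : Prop :=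
  ∀ p ∈ A, ∀ q ∈ A, ∀ r ∈ A, ∀ α β γ : ℤ, 0 ≤ α → 0 ≤ β → 0 ≤ γ → 0 < α + β + γ →
    ∀ x y : ℤ, α * p.1 + β * q.1 + γ * r.1 = (α + β + γ) * (3 * x) →
      α * p.2 + β * q.2 + γ * r.2 = (α + β + γ) * (3 * y) → False

/-- A point with natural coordinates, as used by the finite check, seen in `ℤ²`. -/
def intPoint (p : ℕ × ℕ) : ℤ × ℤ := (p.1, p.2)

/-- Hollowness is invariant under unimodular maps and translations by `3ℤ²`. -/
theorem Hollow.image {A : Set (ℤ × ℤ)} (hA : Hollow A) (d₁ d₂ c₁ c₂ o₁ o₂ : ℤ)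
    (hdet : (d₁ * c₂ - d₂ * c₁) ^ 2 = 1) :
    Hollow ((fun p : ℤ × ℤ => (d₁ * p.1 + d₂ * p.2 - 3 * o₁, c₁ * p.1 + c₂ * p.2 - 3 * o₂)) '' A) := by
  rintro _ ⟨p, hp, rfl⟩ _ ⟨q, hq, rfl⟩ _ ⟨r, hr, rfl⟩ α β γ hα hβ hγ hs x y hx hy
  simp only at hx hy
  refine hA p hp q hq r hr α β γ hα hβ hγ hs
    ((d₁ * c₂ - d₂ * c₁) * (c₂ * (x + o₁) - d₂ * (y + o₂)))
    ((d₁ * c₂ - d₂ * c₁) * (d₁ * (y + o₂) - c₁ * (x + o₁))) ?_ ?_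
  · linear_combination (d₁ * c₂ - d₂ * c₁) * (c₂ * hx - d₂ * hy) -
      (α * p.1 + β * q.1 + γ * r.1) * hdet
  · linear_combination (d₁ * c₂ - d₂ * c₁) * (d₁ * hy - c₁ * hx) -
      (α * p.2 + β * q.2 + γ * r.2) * hdet

theorem ccw_iff (a b c : ℕ × ℕ) : ccw a b c = true ↔
    0 ≤ ((b.1 : ℤ) - a.1) * (c.2 - a.2) - (b.2 - a.2) * (c.1 - a.1) := by
  unfold ccw
  rw [Nat.ble_eq, ← Int.ofNat_le]
  push_cast
  constructor <;> intro h <;> linarith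

theorem Hollow.inTri_eq_false {A : Set (ℤ × ℤ)} (hA : Hollow A) {p q r z : ℕ × ℕ}
    (hp : intPoint p ∈ A) (hq : intPoint q ∈ A) (hr : intPoint r ∈ A) (h₁ : 3 ∣ z.1) (h₂ : 3 ∣ z.2) :
    inTri p q r z = false := by
  by_contra h
  rw [Bool.not_eq_false, inTri, Bool.and_eq_true, Bool.and_eq_true, Bool.and_eq_true,
    Bool.not_eq_true', Bool.eq_false_iff, ne_eq, ccw_iff, ccw_iff, ccw_iff, ccw_iff] at h
  obtain ⟨h0, h1, h2, h3⟩ := h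
  obtain ⟨x, hx⟩ := h₁
  obtain ⟨y, hy⟩ := h₂
  rw [hx, hy] at h1 h2 h3
  push_cast at h1 h2 h3
  refine hA _ hp _ hq _ hr _ _ _ h2 h3 h1 ?_ x y ?_ ?_
  · linarith
  · simp only [intPoint]; ring
  · simp only [intPoint]; ring

/-! ### Points close to the spanning segment -/

/-- If `b` and `t` span the full height `w` of `A`, then no point `p` of `A` is at horizontal
distance `3 * w / (w - 3)` or more to the right of the segment from `b` to `t`. Otherwise one of the
two multiples of `3` next to the height of `p` is the height of a horizontal chord of length at
least `3` of the triangle `b, p, t`, and such a chord contains a point of `3ℤ²`. -/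
theorem excess_lt_right {A : Set (ℤ × ℤ)} (hA : Hollow A) {w d b₁ b₂ : ℤ} (hw : 6 ≤ w)
    (hb : (b₁, b₂) ∈ A) (ht : (b₁ + d, b₂ + w) ∈ A) {p : ℤ × ℤ} (hp : p ∈ A)
    (hp₁ : b₂ ≤ p.2) (hp₂ : p.2 ≤ b₂ + w) :
    (w - 3) * ((p.1 - b₁) * w - d * (p.2 - b₂)) < 3 * w ^ 2 := by
  by_contra! hcon
  set u := (p.1 - b₁) * w - d * (p.2 - b₂) with hu
  have hu3 : 3 * w ≤ u := by nlinarith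
  -- The first (second) inequality says that the chord at height `3 * m` has length at least `3` when
  -- it lies below (above) `p`; the other one is then automatic.
  have key : ∀ m : ℤ, 3 * w * (p.2 - b₂) ≤ u * (3 * m - b₂) →
      3 * w * (w - (p.2 - b₂)) ≤ u * (w - (3 * m - b₂)) → False := by
    intro m h₁ h₂
    set n := b₁ * w + d * (3 * m - b₂) with hn
    have hmod := Int.emod_add_mul_ediv (-n) (3 * w)
    have hm0 := Int.emod_nonneg (-n) (show 3 * w ≠ 0 by omega)
    have hm1 := Int.emod_lt_of_pos (-n) (show 0 < 3 * w by omega)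
    -- The lattice point sought is the first one on the chord, at distance `e / w` from its left end.
    set e := (-n) % (3 * w)
    set k := (-n) / (3 * w)
    refine hA _ hb _ hp _ ht (u * (w - (3 * m - b₂)) - (w - (p.2 - b₂)) * e) (w * e)
      (u * (3 * m - b₂) - (p.2 - b₂) * e) ?_ ?_ ?_ ?_ (-k) m ?_ ?_
    · nlinarith
    · nlinarith
    · nlinarith
    · nlinarith
    · have he : e = -n - 3 * w * k := by linarith
      simp only [he, hn, hu]
      ring
    · simp only
      ring
  have hq := Int.emod_add_mul_ediv p.2 3
  have hq0 := Int.emod_nonneg p.2 (show (3 : ℤ) ≠ 0 by omega)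
  have hq1 := Int.emod_lt_of_pos p.2 (show (0 : ℤ) < 3 by omega)
  set m := p.2 / 3
  rcases le_or_gt (3 * w * (p.2 - b₂)) (u * (3 * m - b₂)) with h | h
  · exact key m h (by nlinarith)
  · refine key (m + 1) ?_ ?_ <;> nlinarith

theorem excess_gt_left {A : Set (ℤ × ℤ)} (hA : Hollow A) {w d b₁ b₂ : ℤ} (hw : 6 ≤ w)
    (hb : (b₁, b₂) ∈ A) (ht : (b₁ + d, b₂ + w) ∈ A) {p : ℤ × ℤ} (hp : p ∈ A)
    (hp₁ : b₂ ≤ p.2) (hp₂ : p.2 ≤ b₂ + w) :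
    -(3 * w ^ 2) < (w - 3) * ((p.1 - b₁) * w - d * (p.2 - b₂)) := by
  have hA' := hA.image (-1) 0 0 1 0 0 (by norm_num)
  have := excess_lt_right hA' (w := w) (d := -d) (b₁ := -b₁) (b₂ := b₂) hw
    ⟨_, hb, by ext <;> simp⟩ ⟨_, ht, by ext <;> simp; ring⟩ (p := (-p.1, p.2))
    ⟨_, hp, by ext <;> simp⟩ hp₁ hp₂
  simp only at this
  nlinarith

theorem dvd_of_mem_lat {w b₁ b₂ d : ℕ} {z : ℕ × ℕ}
    (hz : z ∈ latLeft w b₁ b₂ d ∨ z ∈ latRight w b₁ b₂ d) : 3 ∣ z.1 ∧ 3 ∣ z.2 := by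
  simp only [latLeft, latRight, List.mem_map] at hz
  rcases hz with ⟨j, -, rfl⟩ | ⟨j, -, rfl⟩ <;> exact ⟨dvd_mul_right _ _, dvd_mul_right _ _⟩

theorem Hollow.feasible_eq_true {A : Set (ℤ × ℤ)} (hA : Hollow A) {w b₁ b₂ d : ℕ} {b t p : ℕ × ℕ}
    (hb : intPoint b ∈ A) (ht : intPoint t ∈ A) (hp : intPoint p ∈ A) :
    feasible b t (latLeft w b₁ b₂ d) (latRight w b₁ b₂ d) p = true := by
  unfold feasible
  cases ccw b t p
  · simp only [cond_false, List.all_eq_true]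
    intro z hz
    rw [hA.inTri_eq_false hb hp ht (dvd_of_mem_lat (.inr hz)).1 (dvd_of_mem_lat (.inr hz)).2]
    rfl
  · simp only [cond_true, List.all_eq_true]
    intro z hz
    rw [hA.inTri_eq_false hb ht hp (dvd_of_mem_lat (.inl hz)).1 (dvd_of_mem_lat (.inl hz)).2]
    rfl

theorem Hollow.hit_eq_false {A : Set (ℤ × ℤ)} (hA : Hollow A) {zs L : List (ℕ × ℕ)}
    (hL : ∀ p ∈ L, intPoint p ∈ A) (hzs : ∀ z ∈ zs, 3 ∣ z.1 ∧ 3 ∣ z.2) : hit zs L = false := by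
  simp only [hit, List.any_eq_false, Bool.not_eq_true]
  intro p hp q hq r hr z hz
  exact hA.inTri_eq_false (hL p hp) (hL q hq) (hL r hr) (hzs z hz).1 (hzs z hz).2

/-! ### Reduction to the finite check -/

theorem exists_mem_candidates {A : Set (ℤ × ℤ)} (hA : Hollow A) {w b₁ b₂ d : ℕ} (hw : 6 ≤ w)
    (hb₁ : 6 ≤ b₁) (hb : intPoint (b₁, b₂) ∈ A) (ht : intPoint (b₁ + d, b₂ + w) ∈ A)
    {p : ℤ × ℤ} (hp : p ∈ A) (hp₁ : (b₂ : ℤ) ≤ p.2) (hp₂ : p.2 ≤ b₂ + w) :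
    ∃ p' ∈ candidates w b₁ b₂ d, intPoint p' = p := by
  have ht' : ((b₁ : ℤ) + d, (b₂ : ℤ) + w) ∈ A := by simpa [intPoint] using ht
  have h₁ := excess_lt_right hA (by exact_mod_cast hw) hb ht' hp hp₁ hp₂
  have h₂ := excess_gt_left hA (by exact_mod_cast hw) hb ht' hp hp₁ hp₂
  obtain ⟨i, hi⟩ := Int.eq_ofNat_of_zero_le (sub_nonneg.2 hp₁)
  have hiw : i ≤ w := by omega
  have hw' : (6 : ℤ) ≤ w := by exact_mod_cast hw
  rw [hi] at h₁ h₂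
  have hdiv : ((d * i / w : ℕ) : ℤ) * w ≤ d * i ∧ (d : ℤ) * i < ((d * i / w : ℕ) : ℤ) * w + w := by
    constructor
    · exact_mod_cast Nat.div_mul_le_self _ _
    · have := Nat.lt_div_mul_add (a := d * i) (show 0 < w by omega)
      exact_mod_cast this
  obtain ⟨g, hg⟩ : ∃ g, g = d * i / w := ⟨_, rfl⟩
  rw [← hg] at hdiv
  set E := (p.1 - b₁) * (w : ℤ) - d * i with hE
  have hE₁ : E < 6 * w := by nlinarith
  have hE₂ : -(6 * (w : ℤ)) < E := by nlinarith
  have hx₁ : p.1 - b₁ - g < 7 := by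
    by_contra! h; nlinarith
  have hx₂ : -6 < p.1 - b₁ - g := by
    by_contra! h; nlinarith
  obtain ⟨k, hk⟩ := Int.eq_ofNat_of_zero_le (show 0 ≤ p.1 - b₁ - g + 5 by omega)
  refine ⟨(b₁ + g + k - 5, b₂ + i), ?_, ?_⟩
  · simp only [candidates, List.mem_flatMap, List.mem_map, List.mem_range]
    exact ⟨i, by omega, k, by omega, by rw [hg]⟩
  · ext <;> simp only [intPoint] <;> omega

/-- There is no hollow set in normalised position whose width is at least `w ≥ 6` in the direction
`x` and at least `6` in the direction `x - y`, where `w` is its width in the direction `y`. -/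
theorem reduced_false {A : Set (ℤ × ℤ)} (hA : Hollow A) {w b₁ b₂ d : ℕ} (hw : 6 ≤ w)
    (hb₁ : 6 ≤ b₁) (hb₁' : b₁ < 9) (hb₂ : b₂ < 3) (hd : 2 * d ≤ w)
    (hb : intPoint (b₁, b₂) ∈ A) (ht : intPoint (b₁ + d, b₂ + w) ∈ A)
    (hy : ∀ p ∈ A, (b₂ : ℤ) ≤ p.2 ∧ p.2 ≤ b₂ + w)
    (hx : ∃ p ∈ A, ∃ q ∈ A, (w : ℤ) ≤ p.1 - q.1)
    (hxy : ∃ p ∈ A, ∃ q ∈ A, 6 ≤ (p.1 - p.2) - (q.1 - q.2)) : False := by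
  have hw' : (6 : ℤ) ≤ w := by exact_mod_cast hw
  have ht' : ((b₁ : ℤ) + d, (b₂ : ℤ) + w) ∈ A := by simpa [intPoint] using ht
  obtain ⟨p, hp, q, hq, hpq⟩ := hx
  obtain ⟨r, hr, s, hs, hrs⟩ := hxy
  have hup := excess_lt_right hA hw' hb ht' hp (hy p hp).1 (hy p hp).2
  have huq := excess_gt_left hA hw' hb ht' hq (hy q hq).1 (hy q hq).2
  -- `p` and `q` differ by at least `w` horizontally, of which the slope of the segment accounts for
  -- at most `d`.
  have hgap : ((w : ℤ) - d) * w ≤ ((p.1 - b₁) * w - d * (p.2 - b₂)) -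
      ((q.1 - b₁) * w - d * (q.2 - b₂)) := by
    nlinarith [(hy p hp).1, (hy p hp).2, (hy q hq).1, (hy q hq).2]
  have hgap' := mul_le_mul_of_nonneg_left hgap (show (0 : ℤ) ≤ w - 3 by omega)
  have hguard : ((w : ℤ) - d) * (w - 3) < 6 * w := by
    by_contra! h; nlinarith
  have hw14 : w < 15 := by
    by_contra! h
    have : (15 : ℤ) ≤ w := by exact_mod_cast h
    have : 2 * (d : ℤ) ≤ w := by exact_mod_cast hd
    nlinarith
  obtain ⟨p, hpB, rfl⟩ := exists_mem_candidates hA hw hb₁ hb ht hp (hy p hp).1 (hy p hp).2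
  obtain ⟨q, hqB, rfl⟩ := exists_mem_candidates hA hw hb₁ hb ht hq (hy q hq).1 (hy q hq).2
  obtain ⟨r, hrB, rfl⟩ := exists_mem_candidates hA hw hb₁ hb ht hr (hy r hr).1 (hy r hr).2
  obtain ⟨s, hsB, rfl⟩ := exists_mem_candidates hA hw hb₁ hb ht hs (hy s hs).1 (hy s hs).2
  have hall := checkW_all
  rw [List.all_eq_true] at hall
  have hc := hall (w - 6) (by rw [List.mem_range]; omega)
  rw [show w - 6 + 6 = w by omega] at hc
  simp only [checkW, List.all_eq_true, List.mem_range, Bool.or_eq_true, Nat.ble_eq] at hc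
  rcases hc (b₁ - 6) (by omega) b₂ hb₂ d (by omega) with hc | hc
  · zify [show d ≤ w by omega, show 3 ≤ w by omega] at hc
    omega
  rw [show b₁ - 6 + 6 = b₁ by omega] at hc
  simp only [check, List.all_eq_true, List.mem_filter, Bool.and_eq_true, Bool.or_eq_true,
    Nat.blt_eq] at hc
  have hfr : farRight w b₁ b₂ d p = true := by
    have := (hy _ hp).1
    simp only [intPoint] at this hup huq hgap'
    rw [farRight, Nat.ble_eq]
    zify [show d ≤ w by omega, show 3 ≤ w by omega, show b₂ ≤ p.2 by omega]
    nlinarith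
  have hfl : farLeft w b₁ b₂ d q = true := by
    have := (hy _ hq).1
    simp only [intPoint] at this hup huq hgap'
    rw [farLeft, Nat.ble_eq]
    zify [show d ≤ w by omega, show 3 ≤ w by omega, show b₂ ≤ q.2 by omega]
    nlinarith
  rcases hc p ⟨hpB, hfr, hA.feasible_eq_true hb ht hp⟩ q ⟨hqB, hfl, hA.feasible_eq_true hb ht hq⟩ with hc | hc
  · simp only [intPoint] at hpq
    omega
  rcases hc r ⟨hrB, hA.feasible_eq_true hb ht hr⟩ s ⟨hsB, hA.feasible_eq_true hb ht hs⟩ with hc | hc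
  · simp only [intPoint] at hrs
    omega
  · rw [hA.hit_eq_false] at hc
    · exact Bool.false_ne_true hc
    · simp only [List.mem_cons, List.not_mem_nil, or_false]
      rintro _ (rfl | rfl | rfl | rfl | rfl | rfl) <;> assumption
    · intro z hz
      exact dvd_of_mem_lat (List.mem_append.1 hz)

/-- The change of coordinates by the unimodular matrix with rows `d` and `c`, followed by a
translation by `3ℤ²`, brings `A` into the position required by `reduced_false`. -/
theorem reduced_frame_false {A : Set (ℤ × ℤ)} (hA : Hollow A)
    (hwide : ∀ e₁ e₂ : ℤ, ¬ (e₁ = 0 ∧ e₂ = 0) →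
      ∃ p ∈ A, ∃ q ∈ A, 6 ≤ (e₁ * p.1 + e₂ * p.2) - (e₁ * q.1 + e₂ * q.2))
    {w : ℕ} (hw : 6 ≤ w)
    (hmin : ∀ e₁ e₂ : ℤ, IsCoprime e₁ e₂ →
      ∃ p ∈ A, ∃ q ∈ A, (w : ℤ) ≤ (e₁ * p.1 + e₂ * p.2) - (e₁ * q.1 + e₂ * q.2))
    {c₁ c₂ d₁ d₂ : ℤ} (hdet : (d₁ * c₂ - d₂ * c₁) ^ 2 = 1) {t b : ℤ × ℤ} (ht : t ∈ A) (hb : b ∈ A)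
    (htb : c₁ * t.1 + c₂ * t.2 = c₁ * b.1 + c₂ * b.2 + w)
    (hc : ∀ p ∈ A, c₁ * b.1 + c₂ * b.2 ≤ c₁ * p.1 + c₂ * p.2 ∧
      c₁ * p.1 + c₂ * p.2 ≤ c₁ * b.1 + c₂ * b.2 + w)
    (hd₀ : d₁ * b.1 + d₂ * b.2 ≤ d₁ * t.1 + d₂ * t.2)
    (hd : 2 * ((d₁ * t.1 + d₂ * t.2) - (d₁ * b.1 + d₂ * b.2)) ≤ w) : False := by
  obtain ⟨d, hdx⟩ := Int.eq_ofNat_of_zero_le (sub_nonneg.2 hd₀)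
  -- The offsets place the image of `b` in `[6, 9) × [0, 3)`; the shift by `6` keeps the abscissas of
  -- all candidates natural.
  obtain ⟨o₁, ho₁⟩ : ∃ o, o = (d₁ * b.1 + d₂ * b.2) / 3 - 2 := ⟨_, rfl⟩
  obtain ⟨o₂, ho₂⟩ : ∃ o, o = (c₁ * b.1 + c₂ * b.2) / 3 := ⟨_, rfl⟩
  obtain ⟨b₁, hb₁⟩ := Int.eq_ofNat_of_zero_le
    (show 0 ≤ d₁ * b.1 + d₂ * b.2 - 3 * o₁ by omega)
  obtain ⟨b₂, hb₂⟩ := Int.eq_ofNat_of_zero_le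
    (show 0 ≤ c₁ * b.1 + c₂ * b.2 - 3 * o₂ by omega)
  have hcop : IsCoprime d₁ d₂ :=
    ⟨(d₁ * c₂ - d₂ * c₁) * c₂, -(d₁ * c₂ - d₂ * c₁) * c₁, by linear_combination hdet⟩
  refine reduced_false (hA.image d₁ d₂ c₁ c₂ o₁ o₂ hdet) (w := w) (b₁ := b₁) (b₂ := b₂) (d := d)
    hw (by omega) (by omega) (by omega) (by omega) ⟨b, hb, ?_⟩ ⟨t, ht, ?_⟩ ?_ ?_ ?_
  · ext <;> simp only [intPoint] <;> omega
  · ext <;> simp only [intPoint] <;> push_cast <;> omega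
  · rintro _ ⟨p, hp, rfl⟩
    have := hc p hp
    constructor <;> simp only <;> omega
  · obtain ⟨p, hp, q, hq, h⟩ := hmin d₁ d₂ hcop
    exact ⟨_, ⟨p, hp, rfl⟩, _, ⟨q, hq, rfl⟩, by simp only; omega⟩
  · obtain ⟨p, hp, q, hq, h⟩ := hwide (d₁ - c₁) (d₂ - c₂) (by
      rintro ⟨h₁, h₂⟩
      rw [sub_eq_zero.1 h₁, sub_eq_zero.1 h₂] at hdet
      ring_nf at hdet
      omega)
    refine ⟨_, ⟨p, hp, rfl⟩, _, ⟨q, hq, rfl⟩, ?_⟩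
    simp only
    linarith

/-! ### The lattice width -/

/-- A finite set of lattice points whose hull misses `3ℤ²` has width at most `5` in some direction;
this is the theorem scaled by `3`. -/
theorem exists_direction (A : Finset (ℤ × ℤ)) (hne : A.Nonempty) (hA : Hollow (A : Set (ℤ × ℤ))) :
    ∃ c₁ c₂ : ℤ, ¬ (c₁ = 0 ∧ c₂ = 0) ∧
      ∀ p ∈ A, ∀ q ∈ A, (c₁ * p.1 + c₂ * p.2) - (c₁ * q.1 + c₂ * q.2) ≤ 5 := by
  by_contra! hcon
  have hwide : ∀ e₁ e₂ : ℤ, ¬ (e₁ = 0 ∧ e₂ = 0) →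
      ∃ p ∈ (A : Set (ℤ × ℤ)), ∃ q ∈ (A : Set (ℤ × ℤ)),
        6 ≤ (e₁ * p.1 + e₂ * p.2) - (e₁ * q.1 + e₂ * q.2) := by
    intro e₁ e₂ he
    obtain ⟨p, hp, q, hq, h⟩ := hcon e₁ e₂ (by tauto)
    exact ⟨p, hp, q, hq, by omega⟩
  have hwidth : ∀ e₁ e₂ : ℤ, ∃ t ∈ A, ∃ b ∈ A, ∀ p ∈ A,
      e₁ * b.1 + e₂ * b.2 ≤ e₁ * p.1 + e₂ * p.2 ∧ e₁ * p.1 + e₂ * p.2 ≤ e₁ * t.1 + e₂ * t.2 := by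
    intro e₁ e₂
    obtain ⟨t, ht, ht'⟩ := A.exists_max_image (fun p => e₁ * p.1 + e₂ * p.2) hne
    obtain ⟨b, hb, hb'⟩ := A.exists_min_image (fun p => e₁ * p.1 + e₂ * p.2) hne
    exact ⟨t, ht, b, hb, fun p hp => ⟨hb' p hp, ht' p hp⟩⟩
  -- `S n`: the width in some primitive direction is exactly `n`.
  let S : ℕ → Prop := fun n => ∃ e₁ e₂ : ℤ, IsCoprime e₁ e₂ ∧ ∃ t ∈ A, ∃ b ∈ A,
    e₁ * t.1 + e₂ * t.2 = e₁ * b.1 + e₂ * b.2 + n ∧ ∀ p ∈ A,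
      e₁ * b.1 + e₂ * b.2 ≤ e₁ * p.1 + e₂ * p.2 ∧ e₁ * p.1 + e₂ * p.2 ≤ e₁ * b.1 + e₂ * b.2 + n
  have hS : ∀ e₁ e₂ : ℤ, IsCoprime e₁ e₂ → ∃ n, S n ∧ ∃ p ∈ A, ∃ q ∈ A,
      (n : ℤ) = (e₁ * p.1 + e₂ * p.2) - (e₁ * q.1 + e₂ * q.2) := by
    intro e₁ e₂ he
    obtain ⟨t, ht, b, hb, h⟩ := hwidth e₁ e₂
    obtain ⟨n, hn⟩ := Int.eq_ofNat_of_zero_le (sub_nonneg.2 (h b hb).2)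
    refine ⟨n, ⟨e₁, e₂, he, t, ht, b, hb, by omega, fun p hp => ?_⟩, t, ht, b, hb, by omega⟩
    have := h p hp
    omega
  have hex : ∃ n, S n := by
    obtain ⟨n, hn, -⟩ := hS 1 0 isCoprime_one_left
    exact ⟨n, hn⟩
  classical
  obtain ⟨w, ⟨c₁, c₂, hcop, t, ht, b, hb, htb, hc⟩, hleast⟩ :
      ∃ w, S w ∧ ∀ n, S n → w ≤ n := ⟨Nat.find hex, Nat.find_spec hex, fun n => Nat.find_min' hex⟩
  have hmin : ∀ e₁ e₂ : ℤ, IsCoprime e₁ e₂ →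
      ∃ p ∈ (A : Set (ℤ × ℤ)), ∃ q ∈ (A : Set (ℤ × ℤ)),
        (w : ℤ) ≤ (e₁ * p.1 + e₂ * p.2) - (e₁ * q.1 + e₂ * q.2) := by
    intro e₁ e₂ he
    obtain ⟨n, hn, p, hp, q, hq, h⟩ := hS e₁ e₂ he
    have := hleast n hn
    exact ⟨p, hp, q, hq, by omega⟩
  have hw : 6 ≤ w := by
    obtain ⟨p, hp, q, hq, h⟩ := hwide c₁ c₂ (by
      rintro ⟨rfl, rfl⟩
      exact not_isCoprime_zero_zero hcop)
    have h₁ := hc p hp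
    have h₂ := hc q hq
    omega
  obtain ⟨u, v, huv⟩ := hcop
  -- `(v, -u)` completes `c` to a unimodular basis. Adding multiples of `c` changes the horizontal
  -- displacement `D` from `b` to `t` by multiples of `w`, and a reflection changes its sign, so it
  -- can be brought into `[0, w / 2]`.
  obtain ⟨D, hD⟩ : ∃ D, D = (v * t.1 - u * t.2) - (v * b.1 - u * b.2) := ⟨_, rfl⟩
  have hdm := Int.emod_add_mul_ediv D w
  have hm₀ := Int.emod_nonneg D (show (w : ℤ) ≠ 0 by omega)
  have hm₁ := Int.emod_lt_of_pos D (show (0 : ℤ) < w by omega)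
  set k := D / w
  rcases le_or_gt (2 * (D % w)) w with h | h
  · have hval : ((v - k * c₁) * t.1 + (-u - k * c₂) * t.2) -
        ((v - k * c₁) * b.1 + (-u - k * c₂) * b.2) = D % w := by
      linear_combination hD.symm - hdm - k * htb
    refine reduced_frame_false hA hwide hw hmin (c₁ := c₁) (c₂ := c₂) (d₁ := v - k * c₁)
      (d₂ := -u - k * c₂) ?_ ht hb htb hc ?_ ?_
    · linear_combination (u * c₁ + v * c₂ + 1) * huv
    · linarith
    · linarith
  · have hval : ((-v + (k + 1) * c₁) * t.1 + (u + (k + 1) * c₂) * t.2) -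
        ((-v + (k + 1) * c₁) * b.1 + (u + (k + 1) * c₂) * b.2) = w - D % w := by
      linear_combination -hD.symm + hdm + (k + 1) * htb
    refine reduced_frame_false hA hwide hw hmin (c₁ := c₁) (c₂ := c₂) (d₁ := -v + (k + 1) * c₁)
      (d₂ := u + (k + 1) * c₂) ?_ ht hb htb hc ?_ ?_
    · linear_combination (u * c₁ + v * c₂ + 1) * huv
    · linarith
    · linarith

end HollowWidth

theorem statement_18 (T : Finset (Fin 2 → ℝ)) (hT : T.Nonempty)
    (hthird : ∀ p ∈ T, ∀ i, ∃ n : ℤ, p i = (n : ℝ) / 3)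
    (hhollow : ∀ q ∈ convexHull ℝ (T : Set (Fin 2 → ℝ)),
      ¬ (∀ i, ∃ n : ℤ, q i = (n : ℝ))) :
    ∃ c : Fin 2 → ℤ, c ≠ 0 ∧
      sSup ((fun a => ∑ i, (c i : ℝ) * a i) '' convexHull ℝ (T : Set (Fin 2 → ℝ))) -
      sInf ((fun a => ∑ i, (c i : ℝ) * a i) '' convexHull ℝ (T : Set (Fin 2 → ℝ))) < 2 := by
  classical
  -- The floor is exact on `T`; it only serves to pick the integer `3 * p i`.
  let f : (Fin 2 → ℝ) → ℤ × ℤ := fun p => (⌊3 * p 0⌋, ⌊3 * p 1⌋)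
  have hf : ∀ p ∈ T, (((f p).1 : ℤ) : ℝ) = 3 * p 0 ∧ (((f p).2 : ℤ) : ℝ) = 3 * p 1 := by
    have aux : ∀ p ∈ T, ∀ i, ((⌊3 * p i⌋ : ℤ) : ℝ) = 3 * p i := by
      intro p hp i
      obtain ⟨n, hn⟩ := hthird p hp i
      have : 3 * p i = (n : ℝ) := by rw [hn]; ring
      rw [this, Int.floor_intCast]
    exact fun p hp => ⟨aux p hp 0, aux p hp 1⟩
  have hA : HollowWidth.Hollow ((T.image f : Finset (ℤ × ℤ)) : Set (ℤ × ℤ)) := by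
    intro p hp q hq r hr α β γ hα hβ hγ hs x y hx hy
    simp only [Finset.coe_image, Set.mem_image, Finset.mem_coe] at hp hq hr
    obtain ⟨p, hp, rfl⟩ := hp
    obtain ⟨q, hq, rfl⟩ := hq
    obtain ⟨r, hr, rfl⟩ := hr
    have hx' := congrArg (Int.cast : ℤ → ℝ) hx
    have hy' := congrArg (Int.cast : ℤ → ℝ) hy
    push_cast at hx' hy'
    rw [(hf p hp).1, (hf q hq).1, (hf r hr).1] at hx'
    rw [(hf p hp).2, (hf q hq).2, (hf r hr).2] at hy'
    have hα' : (0 : ℝ) ≤ α := by exact_mod_cast hα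
    have hβ' : (0 : ℝ) ≤ β := by exact_mod_cast hβ
    have hγ' : (0 : ℝ) ≤ γ := by exact_mod_cast hγ
    have hs' : (0 : ℝ) < (α : ℝ) + β + γ := by exact_mod_cast hs
    refine hhollow ![(x : ℝ), (y : ℝ)] ?_ (by
      intro i; fin_cases i
      · exact ⟨x, rfl⟩
      · exact ⟨y, rfl⟩)
    have hmem := (convex_convexHull ℝ (T : Set (Fin 2 → ℝ))).sum_mem (t := Finset.univ)
      (w := ![(α : ℝ) / (α + β + γ), β / (α + β + γ), γ / (α + β + γ)]) (z := ![p, q, r])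
      (by intro i _; fin_cases i <;> simp <;> positivity)
      (by simp [Fin.sum_univ_three]; field_simp)
      (by
        intro i _
        fin_cases i <;> exact subset_convexHull ℝ _ (by assumption))
    convert hmem using 1
    ext i
    fin_cases i <;> simp [Fin.sum_univ_three] <;> field_simp <;> linarith
  obtain ⟨c₁, c₂, hc, hle⟩ := HollowWidth.exists_direction (T.image f) (hT.image f) hA
  refine ⟨![c₁, c₂], ?_, ?_⟩
  · intro h
    exact hc ⟨congrFun h 0, congrFun h 1⟩
  let φ : (Fin 2 → ℝ) →ₗ[ℝ] ℝ := (c₁ : ℝ) • LinearMap.proj 0 + (c₂ : ℝ) • LinearMap.proj 1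
  have hφ : (fun a : Fin 2 → ℝ => ∑ i, ((![c₁, c₂] i : ℤ) : ℝ) * a i) = φ := by
    funext a
    simp [φ, Fin.sum_univ_two]
  rw [hφ]
  obtain ⟨t, ht, ht'⟩ := T.exists_max_image φ hT
  obtain ⟨b, hb, hb'⟩ := T.exists_min_image φ hT
  have hne : (φ '' convexHull ℝ (T : Set (Fin 2 → ℝ))).Nonempty :=
    ⟨_, t, subset_convexHull ℝ _ ht, rfl⟩
  have hsup : sSup (φ '' convexHull ℝ (T : Set (Fin 2 → ℝ))) ≤ φ t := by
    refine csSup_le hne ?_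
    rintro _ ⟨a, ha, rfl⟩
    exact convexHull_min (fun p hp => ht' p hp) (convex_halfSpace_le φ.isLinear _) ha
  have hinf : φ b ≤ sInf (φ '' convexHull ℝ (T : Set (Fin 2 → ℝ))) := by
    refine le_csInf hne ?_
    rintro _ ⟨a, ha, rfl⟩
    exact convexHull_min (fun p hp => hb' p hp) (convex_halfSpace_ge φ.isLinear _) ha
  have h5 := hle (f t) (Finset.mem_image_of_mem f ht) (f b) (Finset.mem_image_of_mem f hb)
  have h5' : (c₁ : ℝ) * (f t).1 + c₂ * (f t).2 - (c₁ * (f b).1 + c₂ * (f b).2) ≤ 5 := by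
    exact_mod_cast h5
  rw [(hf t ht).1, (hf t ht).2, (hf b hb).1, (hf b hb).2] at h5'
  have hφt : φ t = c₁ * t 0 + c₂ * t 1 := by simp [φ]
  have hφb : φ b = c₁ * b 0 + c₂ * b 1 := by simp [φ]
  rw [hφt] at hsup
  rw [hφb] at hinf
  linarith
end

section
/- Let S be a finite nonempty set, let x ∈ S, let m be a positive integer, let d : S × S → ℤ, and let r : S → {0, 1, …, m-1} with r(x) = 0. For y, y' ∈ S let d'(y, y') be the largest integer that is at most d(y, y') and congruent to r(y') - r(y) modulo m. Then there exists a function ℓ : S → ℤ with ℓ(x) = 0, ℓ(y') - ℓ(y) ≤ d(y, y') for all y, y' ∈ S, and ℓ(y) ≡ r(y) (mod m) for all y ∈ S, if and only if for every k ≥ 1 and every sequence y₀, y₁, …, y_k of elements of S with y₀ = y_k one has Σ_{i=1}^{k} d'(y_{i-1}, y_i) ≥ 0. (The mathematical content of Lemma 30 of the paper: such ℓ exists exactly when the complete digraph on S with lengths d' has no negative-length closed walk.) -/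
open Finset

/-!
Since `ℓ y' - ℓ y` is congruent to `r y' - r y` modulo `m`, the constraint `ℓ y' - ℓ y ≤ d y y'` is
equivalent to the same constraint with the rounded-down length `d' y y'`. So `ℓ` is a potential for
the complete digraph with lengths `d'`, and the lengths along a closed walk dominate a telescoping
sum equal to `0`. Conversely, if no closed walk is negative, let `ℓ z` be the minimal length of a
walk from `x` to `z`. The minimum exists because closing such a walk up with the edge `z → x`
bounds its length below by `-d' z x`; extending walks by one edge gives the constraints
(`IsWalkLength.snoc`), and every walk length is congruent to `r z - r x = r z`
(`IsWalkLength.modEq`).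
-/

/-- `n` is the total length, with respect to the edge lengths `w`, of a walk with `k` edges from
`x` to `z`. The empty walk (`k = 0`) is allowed. -/
def IsWalkLength {S : Type*} (w : S → S → ℤ) (x z : S) (k : ℕ) (n : ℤ) : Prop :=
  ∃ y : Fin (k + 1) → S, y 0 = x ∧ y (Fin.last k) = z ∧
    ∑ i : Fin k, w (y i.castSucc) (y i.succ) = n

lemma IsWalkLength.snoc {S : Type*} {w : S → S → ℤ} {x z : S} {k : ℕ} {n : ℤ}
    (h : IsWalkLength w x z k n) (z' : S) : IsWalkLength w x z' (k + 1) (n + w z z') := by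
  obtain ⟨y, h0, hz, hn⟩ := h
  refine ⟨Fin.snoc (α := fun _ => S) y z', ?_, ?_, ?_⟩
  · rw [← Fin.castSucc_zero, Fin.snoc_castSucc, h0]
  · rw [Fin.snoc_last]
  · rw [Fin.sum_univ_castSucc, Fin.snoc_castSucc, Fin.succ_last, Fin.snoc_last, hz, ← hn]
    congr 1
    refine Finset.sum_congr rfl fun i _ => ?_
    rw [Fin.snoc_castSucc, Fin.succ_castSucc, Fin.snoc_castSucc]

lemma sum_fin_telescope {S : Type*} (f : S → ℤ) (k : ℕ) (y : Fin (k + 1) → S) :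
    ∑ i : Fin k, (f (y i.succ) - f (y i.castSucc)) = f (y (Fin.last k)) - f (y 0) := by
  have h1 := Fin.sum_univ_succ (fun i => f (y i))
  have h2 := Fin.sum_univ_castSucc (fun i => f (y i))
  rw [Finset.sum_sub_distrib]
  linarith

lemma IsWalkLength.modEq {S : Type*} {w : S → S → ℤ} {x z : S} {k : ℕ} {n : ℤ} {m : ℤ}
    {f : S → ℤ} (hw : ∀ y y', m ∣ w y y' - (f y' - f y)) (h : IsWalkLength w x z k n) :
    m ∣ n - (f z - f x) := by
  obtain ⟨y, rfl, rfl, rfl⟩ := h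
  rw [← sum_fin_telescope f k y, ← Finset.sum_sub_distrib]
  exact Finset.dvd_sum fun i _ => hw _ _

/-- `a - (a - b) % m`, the rounding of `a` down to the residue class of `b`, dominates every integer
`c ≤ a` in that class. -/
lemma le_sub_emod {m : ℤ} (hm : 0 < m) {a b c : ℤ} (hca : c ≤ a) (hcb : m ∣ c - b) :
    c ≤ a - (a - b) % m := by
  have h : (a - b) % m = (a - c) % m := by
    refine (Int.modEq_iff_dvd.mpr ?_ : (a - b) ≡ (a - c) [ZMOD m])
    rw [sub_sub_sub_cancel_left, ← neg_sub, dvd_neg]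
    exact hcb
  have h2 : (a - c) % m ≤ a - c := by
    have h3 := Int.emod_add_mul_ediv (a - c) m
    have h4 := mul_nonneg hm.le (Int.ediv_nonneg (sub_nonneg.mpr hca) hm.le)
    linarith
  omega

theorem statement_19 {S : Type*} [Fintype S] (x : S) (m : ℕ) (hm : 0 < m)
    (d : S → S → ℤ) (r : S → ℕ) (hr : ∀ y, r y < m) (hrx : r x = 0) :
    (∃ ℓ : S → ℤ, ℓ x = 0 ∧ (∀ y y', ℓ y' - ℓ y ≤ d y y') ∧
        ∀ y, ℓ y ≡ (r y : ℤ) [ZMOD (m : ℤ)]) ↔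
    (∀ k : ℕ, 1 ≤ k → ∀ y : Fin (k + 1) → S, y 0 = y (Fin.last k) →
      0 ≤ ∑ i : Fin k,
        (d (y i.castSucc) (y i.succ) -
          (d (y i.castSucc) (y i.succ) -
            ((r (y i.succ) : ℤ) - (r (y i.castSucc) : ℤ))) % (m : ℤ))) := by
  have hm' : (0 : ℤ) < m := by exact_mod_cast hm
  constructor
  · rintro ⟨ℓ, -, hd, hmod⟩ k - y hy
    have ht := sum_fin_telescope ℓ k y
    rw [hy, sub_self] at ht
    rw [← ht]
    refine Finset.sum_le_sum fun i _ => le_sub_emod hm' (hd _ _) ?_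
    have h1 := (hmod (y i.succ)).symm.dvd
    have h2 := (hmod (y i.castSucc)).symm.dvd
    have h3 := dvd_sub h1 h2
    rwa [sub_sub_sub_comm] at h3
  · intro H
    let w : S → S → ℤ := fun y y' => d y y' - (d y y' - ((r y' : ℤ) - (r y : ℤ))) % (m : ℤ)
    have hclosed : ∀ z k n, IsWalkLength w z z k n → 0 ≤ n := by
      rintro z k n ⟨y, h0, hz, rfl⟩
      rcases Nat.eq_zero_or_pos k with rfl | hk
      · simp
      · exact H k hk y (h0.trans hz.symm)
    have hwd : ∀ y y', w y y' ≤ d y y' := fun y y' =>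
      sub_le_self _ (Int.emod_nonneg _ hm'.ne')
    have hwm : ∀ y y', (m : ℤ) ∣ w y y' - ((r y' : ℤ) - (r y : ℤ)) := by
      intro y y'
      have h := Int.dvd_self_sub_emod (x := d y y' - ((r y' : ℤ) - (r y : ℤ))) (m := (m : ℤ))
      rwa [sub_right_comm] at h
    have hnil : IsWalkLength w x x 0 0 := ⟨fun _ => x, rfl, rfl, by simp⟩
    have hmin : ∀ z, ∃ n, (∃ k, IsWalkLength w x z k n) ∧
        ∀ n', (∃ k, IsWalkLength w x z k n') → n ≤ n' := by
      intro z
      refine Int.exists_least_of_bdd ⟨-w z x, ?_⟩ ⟨_, _, hnil.snoc z⟩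
      rintro n ⟨k, hn⟩
      have := hclosed _ _ _ (hn.snoc x)
      linarith
    choose ℓ hℓ hle using hmin
    refine ⟨ℓ, ?_, ?_, ?_⟩
    · obtain ⟨k, hk⟩ := hℓ x
      exact le_antisymm (hle x 0 ⟨0, hnil⟩) (hclosed _ _ _ hk)
    · intro y y'
      obtain ⟨k, hk⟩ := hℓ y
      have h1 := hle y' _ ⟨_, hk.snoc y'⟩
      have h2 := hwd y y'
      linarith
    · intro y
      obtain ⟨k, hk⟩ := hℓ y
      have h := hk.modEq (f := fun z => (r z : ℤ)) hwm
      simp only [hrx, Nat.cast_zero, sub_zero] at h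
      exact (Int.modEq_iff_dvd.mpr h).symm
end
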